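/- Let F ∈ Fields_1, let p ∈ F[t] be a monic irreducible polynomial, let a ∈ Λ^3 F(p)^×, and let b_1, b_2 ∈ Λ^4 F(t)^× both be lifts of a, i.e. ∂_{ν_p}^{(4)}(b_i) = a and ∂_{ν_q}^{(4)}(b_i) = 0 for every monic irreducible q ≠ p, for i = 1,2. Then b_1 − b_2 = a_1 + δ_4(a_2), where a_1 lies in the image of the natural map Λ^4 F^× → Λ^4 F(t)^× and a_2 ∈ B_2(F(t))⊗Λ^2 F(t)^× is such that for every monic irreducible q ∈ F[t] the element ∂_{ν_q}(a_2) ∈ B_2(F(q))⊗F(q)^× lies in the ℚ-span of the elements {x}_2 ⊗ x, x ∈ F(q)∖{0,1}. -/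

import Mathlib

open scoped TensorProduct
open ExteriorAlgebra

noncomputable section ChowPrelim

universe u

/-- The ℚ-vector space `F^× ⊗ ℚ` attached to a field `F`. -/
abbrev UnitsQ (F : Type u) [Field F] : Type u := ℚ ⊗[ℤ] (Additive Fˣ)

/-- The canonical map `F → F^× ⊗ ℚ`, sending a nonzero `x` to `x ⊗ 1` and `0` to `0`. -/
noncomputable def mkQ {F : Type u} [Field F] (x : F) : UnitsQ F :=
  letI := Classical.dec (x = 0)
  if h : x = 0 then 0 else (1 : ℚ) ⊗ₜ[ℤ] (Additive.ofMul (Units.mk0 x h))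

/-- The wedge `x₁ ∧ ⋯ ∧ xₙ ∈ Λ^n (F^× ⊗ ℚ)` of a family of elements of `F`. -/
noncomputable def wedgeF {F : Type u} [Field F] (n : ℕ) (x : Fin n → F) :
    ⋀[ℚ]^n (UnitsQ F) :=
  ⟨ExteriorAlgebra.ιMulti ℚ n (fun i => mkQ (x i)),
    ExteriorAlgebra.ιMulti_range ℚ n ⟨_, rfl⟩⟩

/-- Wedge of an abstract family of vectors. -/
noncomputable def wedgeV {M : Type u} [AddCommGroup M] [Module ℚ M] (n : ℕ) (v : Fin n → M) :
    ⋀[ℚ]^n M :=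
  ⟨ExteriorAlgebra.ιMulti ℚ n v, ExteriorAlgebra.ιMulti_range ℚ n ⟨_, rfl⟩⟩

/-- The product `a ∧ v₁ ∧ ⋯ ∧ v_q : Λ^r M` of an element `a ∈ Λ^p M` with `q` further vectors,
where `p + q = r`. -/
noncomputable def wedgeMulC {M : Type u} [AddCommGroup M] [Module ℚ M] (p q r : ℕ)
    (h : p + q = r) (a : ⋀[ℚ]^p M) (v : Fin q → M) : ⋀[ℚ]^r M :=
  ⟨a.1 * (ExteriorAlgebra.ιMulti ℚ q v : ExteriorAlgebra ℚ M), by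
    subst h
    have hmem : (ExteriorAlgebra.ιMulti ℚ q v : ExteriorAlgebra ℚ M) ∈
        (LinearMap.range (ι ℚ : M →ₗ[ℚ] ExteriorAlgebra ℚ M)) ^ q :=
      ExteriorAlgebra.ιMulti_range ℚ q ⟨_, rfl⟩
    have h2 := Submodule.mul_mem_mul a.2 hmem
    rw [← pow_add] at h2
    exact h2⟩

/-- The functorial map `Λ^n M → Λ^n N` induced by a linear map. -/
noncomputable def powMap {M N : Type u} [AddCommGroup M] [Module ℚ M]
    [AddCommGroup N] [Module ℚ N] (n : ℕ) (f : M →ₗ[ℚ] N) :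
    ⋀[ℚ]^n M →ₗ[ℚ] ⋀[ℚ]^n N :=
  (ExteriorAlgebra.map f).toLinearMap.restrict (p := ⋀[ℚ]^n M) (q := ⋀[ℚ]^n N)
    (by
      intro x hx
      have h : Submodule.map (ExteriorAlgebra.map f).toLinearMap (⋀[ℚ]^n M) ≤ ⋀[ℚ]^n N := by
        rw [← ExteriorAlgebra.ιMulti_span_fixedDegree, ← ExteriorAlgebra.ιMulti_span_fixedDegree,
          Submodule.map_span]
        refine Submodule.span_le.2 ?_
        rintro _ ⟨_, ⟨v, rfl⟩, rfl⟩
        exact Submodule.subset_span ⟨f ∘ v, (ExteriorAlgebra.map_apply_ιMulti f v).symm⟩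
      exact h ⟨x, hx, rfl⟩)

/-- The linear map `F^× ⊗ ℚ → K^× ⊗ ℚ` induced by a field embedding. -/
noncomputable def unitsQMap {F K : Type u} [Field F] [Field K] (j : F →+* K) :
    UnitsQ F →ₗ[ℚ] UnitsQ K :=
  LinearMap.baseChange ℚ
    ((MonoidHom.toAdditive (Units.map (j : F →* K))).toIntLinearMap)

section PreBloch

variable (F : Type u) [Field F]

/-- Auxiliary "difference" of two points of `P^1(F) = Option F` (`none` is `∞`),
used to define the cross-ratio. -/
def pdiff : Option F → Option F → F
  | some a, some b => a - b
  | _, _ => 1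

/-- The cross-ratio of four points of `P^1(F)`, as an element of `F`
(it lies in `F ∖ {0,1}` when the four points are distinct). -/
def crossRatio (x1 x2 x3 x4 : Option F) : F :=
  (pdiff F x1 x3 * pdiff F x2 x4) / (pdiff F x1 x4 * pdiff F x2 x3)

/-- The subspace of relations defining the pre-Bloch group: `{0}₂, {1}₂, {∞}₂` and the
five-term cross-ratio relations for five distinct points of `P^1(F)`. -/
def B2Rel : Submodule ℚ (Option F →₀ ℚ) :=
  Submodule.span ℚ
    ({Finsupp.single (some 0) 1, Finsupp.single (some 1) 1, Finsupp.single none 1} ∪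
      {r | ∃ x : Fin 5 → Option F, Function.Injective x ∧
        r = ∑ i : Fin 5, ((-1 : ℚ) ^ (i : ℕ)) •
          Finsupp.single (some (crossRatio F (x (i.succAbove 0)) (x (i.succAbove 1))
            (x (i.succAbove 2)) (x (i.succAbove 3)))) (1 : ℚ)})

/-- The pre-Bloch group `B₂(F)` (with ℚ-coefficients). -/
abbrev B2 : Type u := (Option F →₀ ℚ) ⧸ B2Rel F

/-- The generator `{x}₂` of the pre-Bloch group. -/
def B2.gen {F : Type u} [Field F] (x : F) : B2 F :=
  Submodule.Quotient.mk (Finsupp.single (some x) 1)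

end PreBloch

section Deltas

variable (F : Type u) [Field F]

/-- `d` is the differential `δ₂ : B₂(F) → Λ² F^×`, `{x}₂ ↦ x ∧ (1-x)`. -/
def IsDelta2 (d : B2 F →ₗ[ℚ] ⋀[ℚ]^2 (UnitsQ F)) : Prop :=
  ∀ x : F, x ≠ 0 → x ≠ 1 → d (B2.gen x) = wedgeF 2 ![x, 1 - x]

/-- `d` is the differential `δ₃ : B₂(F) ⊗ F^× → Λ³ F^×`, `{x}₂ ⊗ y ↦ x ∧ (1-x) ∧ y`. -/
def IsDelta3 (d : B2 F ⊗[ℚ] UnitsQ F →ₗ[ℚ] ⋀[ℚ]^3 (UnitsQ F)) : Prop :=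
  ∀ x y : F, x ≠ 0 → x ≠ 1 → y ≠ 0 →
    d (B2.gen x ⊗ₜ mkQ y) = wedgeF 3 ![x, 1 - x, y]

/-- `d` is the differential `δ₄ : B₂(F) ⊗ Λ² F^× → Λ⁴ F^×`,
`{x}₂ ⊗ (y ∧ z) ↦ x ∧ (1-x) ∧ y ∧ z`. -/
def IsDelta4 (d : B2 F ⊗[ℚ] (⋀[ℚ]^2 (UnitsQ F)) →ₗ[ℚ] ⋀[ℚ]^4 (UnitsQ F)) : Prop :=
  ∀ x y z : F, x ≠ 0 → x ≠ 1 → y ≠ 0 → z ≠ 0 →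
    d (B2.gen x ⊗ₜ wedgeF 2 ![y, z]) = wedgeF 4 ![x, 1 - x, y, z]

end Deltas

section Valuations

variable {F K : Type u} [Field F] [Field K]

/-- `ν` is (the additive form of) a discrete valuation on `F`:
a surjection onto `ℤ` defined on `F ∖ {0}`, multiplicative, and
satisfying the ultrametric inequality. -/
structure IsDVal (ν : F → ℤ) : Prop where
  map_mul : ∀ x y : F, x ≠ 0 → y ≠ 0 → ν (x * y) = ν x + ν y
  map_add : ∀ x y : F, x ≠ 0 → y ≠ 0 → x + y ≠ 0 → min (ν x) (ν y) ≤ ν (x + y)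
  surj : ∀ n : ℤ, ∃ x : F, x ≠ 0 ∧ ν x = n

/-- `res : F → K` realizes `K` as the residue field of the discrete valuation `ν`:
it is a surjective ring homomorphism on the valuation ring `O_ν` with kernel the
maximal ideal `m_ν` (and arbitrary elsewhere). -/
structure IsResidue (ν : F → ℤ) (res : F → K) : Prop where
  map_one : res 1 = 1
  map_add : ∀ x y : F, (x = 0 ∨ 0 ≤ ν x) → (y = 0 ∨ 0 ≤ ν y) →
    res (x + y) = res x + res y
  map_mul : ∀ x y : F, (x = 0 ∨ 0 ≤ ν x) → (y = 0 ∨ 0 ≤ ν y) →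
    res (x * y) = res x * res y
  zero_iff : ∀ x : F, (x = 0 ∨ 0 ≤ ν x) → (res x = 0 ↔ (x = 0 ∨ 0 < ν x))
  surj : ∀ z : K, ∃ x : F, (x = 0 ∨ 0 ≤ ν x) ∧ res x = z

/-- `D` is the tame symbol `∂_ν^{(n+1)} : Λ^{n+1} F^× → Λ^n K^×` attached to the discrete
valuation `ν` with residue field `K` (via `res`): it is characterized by
`∂(π ∧ u₂ ∧ ⋯ ∧ u_{n+1}) = ū₂ ∧ ⋯ ∧ ū_{n+1}` for a uniformizer `π` and units `uᵢ`. -/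
def IsTame (ν : F → ℤ) (res : F → K) (n : ℕ)
    (D : ⋀[ℚ]^(n + 1) (UnitsQ F) →ₗ[ℚ] ⋀[ℚ]^n (UnitsQ K)) : Prop :=
  ∀ (π : F) (u : Fin n → F), π ≠ 0 → ν π = 1 → (∀ i, u i ≠ 0 ∧ ν (u i) = 0) →
    D (wedgeF (n + 1) (Fin.cons π u)) = wedgeF n (fun i => res (u i))

/-- `D` is the tame symbol `∂_ν^{(2)} : Λ² F^× → K^×`, with target the residue field itself. -/
def IsTame2U (ν : F → ℤ) (res : F → K) (D : ⋀[ℚ]^2 (UnitsQ F) →ₗ[ℚ] UnitsQ K) : Prop :=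
  ∀ π u : F, π ≠ 0 → ν π = 1 → u ≠ 0 → ν u = 0 → D (wedgeF 2 ![π, u]) = mkQ (res u)

/-- `D` is the tame symbol `∂_ν : B₂(F) ⊗ F^× → B₂(K)`. -/
def IsTameB1 (ν : F → ℤ) (res : F → K)
    (D : B2 F ⊗[ℚ] UnitsQ F →ₗ[ℚ] B2 K) : Prop :=
  (∀ a b : F, a ≠ 0 → a ≠ 1 → ν a ≠ 0 → b ≠ 0 → D (B2.gen a ⊗ₜ mkQ b) = 0) ∧
  (∀ u b : F, u ≠ 0 → ν u = 0 → b ≠ 0 →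
    D (B2.gen u ⊗ₜ mkQ b) = -((ν b : ℚ) • B2.gen (res u)))

/-- `D` is the tame symbol `∂_ν : B₂(F) ⊗ Λ² F^× → B₂(K) ⊗ K^×`, where `D2` is the tame
symbol `∂_ν^{(2)}`. -/
def IsTameB2 (ν : F → ℤ) (res : F → K) (D2 : ⋀[ℚ]^2 (UnitsQ F) →ₗ[ℚ] UnitsQ K)
    (D : B2 F ⊗[ℚ] (⋀[ℚ]^2 (UnitsQ F)) →ₗ[ℚ] B2 K ⊗[ℚ] UnitsQ K) : Prop :=
  (∀ (a : F) (b : ⋀[ℚ]^2 (UnitsQ F)), a ≠ 0 → a ≠ 1 → ν a ≠ 0 → D (B2.gen a ⊗ₜ b) = 0) ∧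
  (∀ (u : F) (b : ⋀[ℚ]^2 (UnitsQ F)), u ≠ 0 → ν u = 0 →
    D (B2.gen u ⊗ₜ b) = -(B2.gen (res u) ⊗ₜ D2 b))

/-- `D` is the tame symbol `∂_ν : B₂(F) ⊗ Λ^{n+1} F^× → B₂(K) ⊗ Λ^n K^×`, where `Dn` is
the tame symbol `∂_ν^{(n+1)}`. -/
def IsTameBGen (ν : F → ℤ) (res : F → K) (n : ℕ)
    (Dn : ⋀[ℚ]^(n + 1) (UnitsQ F) →ₗ[ℚ] ⋀[ℚ]^n (UnitsQ K))
    (D : B2 F ⊗[ℚ] (⋀[ℚ]^(n + 1) (UnitsQ F)) →ₗ[ℚ] B2 K ⊗[ℚ] (⋀[ℚ]^n (UnitsQ K))) : Prop :=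
  (∀ (a : F) (b : ⋀[ℚ]^(n + 1) (UnitsQ F)), a ≠ 0 → a ≠ 1 → ν a ≠ 0 →
    D (B2.gen a ⊗ₜ b) = 0) ∧
  (∀ (u : F) (b : ⋀[ℚ]^(n + 1) (UnitsQ F)), u ≠ 0 → ν u = 0 →
    D (B2.gen u ⊗ₜ b) = -(B2.gen (res u) ⊗ₜ Dn b))

end Valuations

section Fields

variable (k F : Type u) [Field k] [Field F] [Algebra k F]

/-- `F` is a finitely generated extension of `k` of transcendence degree `1`. -/
def IsFields1 : Prop :=
  (∃ s : Finset F, IntermediateField.adjoin k (s : Set F) = ⊤) ∧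
  ∃ x : F, Transcendental k x ∧
    Algebra.IsAlgebraic (IntermediateField.adjoin k {x}) F

/-- `F` is a finitely generated extension of `k` of transcendence degree `2`. -/
def IsFields2 : Prop :=
  (∃ s : Finset F, IntermediateField.adjoin k (s : Set F) = ⊤) ∧
  ∃ x y : F, AlgebraicIndependent k ![x, y] ∧
    Algebra.IsAlgebraic (IntermediateField.adjoin k {x, y}) F

/-- `res : F → k` is the canonical residue map of `ν` onto `k`
(restricting to the identity on `k`). -/
def GoodResK (ν : F → ℤ) (res : F → k) : Prop :=
  IsResidue ν res ∧ ∀ c : k, res (algebraMap k F c) = c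

/-- The set `val(F)` of discrete valuations of `F` trivial on `k` with residue field `k`. -/
def ValInd : Type u :=
  {ν : F → ℤ // IsDVal ν ∧ (∀ c : k, c ≠ 0 → ν (algebraMap k F c) = 0) ∧
    ∃ res : F → k, GoodResK k F ν res}

/-- `h : Λ³ F^× → B₂(k)` is a lifted reciprocity map on `F ∈ Fields₁`:
(1) `-δ₂(h a) = Σ_{ν ∈ val(F)} ∂_ν^{(3)} a`;
(2) `h (δ₃ c) = Σ_{ν ∈ val(F)} ∂_ν c`;
(3) `h` vanishes on the image of `Λ² F^× ⊗ k^× → Λ³ F^×`. -/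
def IsLiftedRec (h : ⋀[ℚ]^3 (UnitsQ F) →ₗ[ℚ] B2 k) : Prop :=
  (∀ d2 : B2 k →ₗ[ℚ] ⋀[ℚ]^2 (UnitsQ k), IsDelta2 k d2 →
    ∀ res : ∀ _ : ValInd k F, F → k, (∀ v : ValInd k F, GoodResK k F v.1 (res v)) →
    ∀ D : ∀ _ : ValInd k F, ⋀[ℚ]^3 (UnitsQ F) →ₗ[ℚ] ⋀[ℚ]^2 (UnitsQ k),
      (∀ v : ValInd k F, IsTame v.1 (res v) 2 (D v)) →
    ∀ a : ⋀[ℚ]^3 (UnitsQ F), -(d2 (h a)) = ∑ᶠ v : ValInd k F, D v a) ∧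
  (∀ d3 : B2 F ⊗[ℚ] UnitsQ F →ₗ[ℚ] ⋀[ℚ]^3 (UnitsQ F), IsDelta3 F d3 →
    ∀ res : ∀ _ : ValInd k F, F → k, (∀ v : ValInd k F, GoodResK k F v.1 (res v)) →
    ∀ DB : ∀ _ : ValInd k F, B2 F ⊗[ℚ] UnitsQ F →ₗ[ℚ] B2 k,
      (∀ v : ValInd k F, IsTameB1 v.1 (res v) (DB v)) →
    ∀ c : B2 F ⊗[ℚ] UnitsQ F, h (d3 c) = ∑ᶠ v : ValInd k F, DB v c) ∧
  (∀ (y z : F) (c : k), y ≠ 0 → z ≠ 0 → c ≠ 0 →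
    h (wedgeF 3 ![y, z, algebraMap k F c]) = 0)

end Fields

/-- The degree `[K : j(F)]` of a field embedding. -/
noncomputable def fieldDeg {F K : Type u} [Field F] [Field K] (j : F →+* K) : ℕ :=
  letI : Algebra F K := j.toAlgebra
  Module.finrank F K

/-- The pullback `j^* h = (1/[F₂ : j(F₁)]) · h ∘ j_*` of a lifted reciprocity map. -/
noncomputable def pullRec (k F₁ F₂ : Type u) [Field k] [Field F₁] [Field F₂]
    (j : F₁ →+* F₂) (h : ⋀[ℚ]^3 (UnitsQ F₂) →ₗ[ℚ] B2 k) :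
    ⋀[ℚ]^3 (UnitsQ F₁) →ₗ[ℚ] B2 k :=
  ((fieldDeg j : ℚ))⁻¹ • (h ∘ₗ powMap 3 (unitsQMap j))

end ChowPrelim

noncomputable section ChowPrelim2

universe u

open scoped TensorProduct

/-- The monic irreducible polynomials over `F`, indexing the closed points of `𝔸¹_F`,
i.e. the general discrete valuations of `F(t)`. -/
def MonicIrr (F : Type u) [Field F] : Type u :=
  {p : Polynomial F // p.Monic ∧ Irreducible p}

/-- The residue field `F(p) = F[t]/(p)` of the valuation attached to a monic irreducible
polynomial `p`. -/
def ResField {F : Type u} [Field F] (p : MonicIrr F) : Type u := AdjoinRoot p.1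

noncomputable instance ResField.instField {F : Type u} [Field F] (p : MonicIrr F) :
    Field (ResField p) :=
  letI : Fact (Irreducible p.1) := ⟨p.2.2⟩
  inferInstanceAs (Field (AdjoinRoot p.1))

/-- `ν` is the discrete valuation of `F(t)` attached to the monic irreducible polynomial `p`. -/
def IsNuP {F : Type u} [Field F] (p : MonicIrr F) (ν : RatFunc F → ℤ) : Prop :=
  IsDVal ν ∧ ν (algebraMap (Polynomial F) (RatFunc F) p.1) = 1 ∧
    ∀ g : Polynomial F, g ≠ 0 → ¬(p.1 ∣ g) →
      ν (algebraMap (Polynomial F) (RatFunc F) g) = 0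

/-- `res` is the canonical residue map `F(t) → F(p)` of the valuation attached to `p`. -/
def IsResP {F : Type u} [Field F] (p : MonicIrr F) (ν : RatFunc F → ℤ)
    (res : RatFunc F → ResField p) : Prop :=
  IsResidue ν res ∧ ∀ g : Polynomial F,
    res (algebraMap (Polynomial F) (RatFunc F) g) =
      (AdjoinRoot.mk p.1 g : AdjoinRoot p.1)

/-- Bundled realization of the residue field of a discrete valuation `ν` on `L`
(trivial on `k`): a field `R` with a `k`-algebra structure together with the residue map. -/
structure ResData (k L : Type u) [Field k] [Field L] [Algebra k L] (ν : L → ℤ) :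
    Type (u + 1) where
  R : Type u
  [fieldR : Field R]
  [algR : Algebra k R]
  res : L → R
  isRes : IsResidue ν res
  compat : ∀ c : k, res (algebraMap k L c) = algebraMap k R c

attribute [instance] ResData.fieldR ResData.algR

/-- The set `dval(L)` of divisorial valuations of `L ∈ Fields₂`: discrete valuations trivial
on `k` whose residue field is a finitely generated extension of `k` of transcendence
degree `1`. -/
def DValInd (k L : Type u) [Field k] [Field L] [Algebra k L] : Type u :=
  {ν : L → ℤ // IsDVal ν ∧ (∀ c : k, c ≠ 0 → ν (algebraMap k L c) = 0) ∧
    ∃ rd : ResData k L ν, IsFields1 k rd.R}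

/-- A height-one prime ideal (in a domain). -/
def IsHeightOne {R : Type u} [CommRing R] (p : Ideal R) : Prop :=
  p.IsPrime ∧ p ≠ ⊥ ∧ ∀ q : Ideal R, q.IsPrime → q < p → q = ⊥

/-- `R/p` is regular, i.e. (for a one-dimensional local ring) the maximal ideal of `R/p`
is principal. -/
def QuotRegular {R : Type u} [CommRing R] [IsLocalRing R] (p : Ideal R) : Prop :=
  ∃ t : R, Ideal.map (Ideal.Quotient.mk p) (IsLocalRing.maximalIdeal R) =
    Ideal.span {Ideal.Quotient.mk p t}

/-- The height-one primes `p` of `R` with `R/p` regular. -/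
def RegPrimes (R : Type u) [CommRing R] [IsLocalRing R] : Type u :=
  {p : Ideal R // IsHeightOne p ∧ QuotRegular p}

instance RegPrimes.isPrime {R : Type u} [CommRing R] [IsLocalRing R] (p : RegPrimes R) :
    p.1.IsPrime := p.2.1.1

/-- The residue field `κ(p) = Frac(R/p)` of a prime `p`. -/
def ResFieldP {R : Type u} [CommRing R] [IsLocalRing R] [IsDomain R] (p : RegPrimes R) :
    Type u := FractionRing (R ⧸ p.1)

noncomputable instance ResFieldP.instField {R : Type u} [CommRing R] [IsLocalRing R]
    [IsDomain R] (p : RegPrimes R) : Field (ResFieldP p) :=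
  inferInstanceAs (Field (FractionRing (R ⧸ p.1)))

/-- `ν` is the discrete valuation `ν_p` of `L = Frac R` attached to a height-one prime `p`:
it is nonnegative on `R` and positive exactly on `p`. -/
def IsNuPrime {R L : Type u} [CommRing R] [Field L] [Algebra R L] (p : Ideal R)
    (ν : L → ℤ) : Prop :=
  IsDVal ν ∧ (∀ x : R, x ≠ 0 → 0 ≤ ν (algebraMap R L x)) ∧
    ∀ x : R, x ≠ 0 → (x ∈ p ↔ 0 < ν (algebraMap R L x))

/-- `res` is the canonical residue map `L → κ(p)` of the valuation `ν_p`. -/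
def IsResPrime {R L : Type u} [CommRing R] [IsLocalRing R] [IsDomain R] [Field L]
    [Algebra R L] (p : RegPrimes R) (ν : L → ℤ) (res : L → ResFieldP p) : Prop :=
  IsResidue ν res ∧ ∀ x : R,
    res (algebraMap R L x) =
      algebraMap (R ⧸ p.1) (FractionRing (R ⧸ p.1)) (Ideal.Quotient.mk p.1 x)

/-- `ν̄` is the discrete valuation of `κ(p)` attached to the discrete valuation ring `R/p`:
nonnegative on `R/p` and positive exactly on the image of the maximal ideal of `R`. -/
def IsNuBar {R : Type u} [CommRing R] [IsLocalRing R] [IsDomain R] (p : RegPrimes R)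
    (ν : ResFieldP p → ℤ) : Prop :=
  IsDVal ν ∧
  (∀ x : R ⧸ p.1, x ≠ 0 →
    0 ≤ ν (algebraMap (R ⧸ p.1) (FractionRing (R ⧸ p.1)) x)) ∧
  ∀ x : R, Ideal.Quotient.mk p.1 x ≠ 0 →
    (x ∈ IsLocalRing.maximalIdeal R ↔
      0 < ν (algebraMap (R ⧸ p.1) (FractionRing (R ⧸ p.1)) (Ideal.Quotient.mk p.1 x)))

/-- `res` is the canonical residue map `κ(p) → k` of the valuation `ν̄_p`
(restricting to the identity on `k`). -/
def IsResBar {k R : Type u} [Field k] [CommRing R] [IsLocalRing R] [IsDomain R]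
    [Algebra k R] (p : RegPrimes R) (ν : ResFieldP p → ℤ) (res : ResFieldP p → k) : Prop :=
  IsResidue ν res ∧ ∀ c : k,
    res (algebraMap (R ⧸ p.1) (FractionRing (R ⧸ p.1))
      (Ideal.Quotient.mk p.1 (algebraMap k R c))) = c

/-- The Steinberg relations subspace of `Λ^n F^×` (with ℚ-coefficients). -/
def MilnorRel (F : Type u) [Field F] : (n : ℕ) → Submodule ℚ (⋀[ℚ]^n (UnitsQ F))
  | 0 => ⊥
  | 1 => ⊥
  | (m + 2) => Submodule.span ℚ
      {x | ∃ (a : F) (v : Fin m → F), a ≠ 0 ∧ a ≠ 1 ∧ (∀ i, v i ≠ 0) ∧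
        x = wedgeF (m + 2) (Fin.cons a (Fin.cons (1 - a) v))}

/-- The rational Milnor K-group `K_n^M(F) ⊗ ℚ`: the quotient of `Λ^n F^×` by the
Steinberg relations. -/
def MilnorQ (F : Type u) [Field F] (n : ℕ) : Type u :=
  (⋀[ℚ]^n (UnitsQ F)) ⧸ MilnorRel F n

noncomputable instance MilnorQ.instAddCommGroup (F : Type u) [Field F] (n : ℕ) :
    AddCommGroup (MilnorQ F n) :=
  inferInstanceAs (AddCommGroup ((⋀[ℚ]^n (UnitsQ F)) ⧸ MilnorRel F n))

noncomputable instance MilnorQ.instModule (F : Type u) [Field F] (n : ℕ) :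
    Module ℚ (MilnorQ F n) :=
  inferInstanceAs (Module ℚ ((⋀[ℚ]^n (UnitsQ F)) ⧸ MilnorRel F n))

/-- The class of an element of `Λ^n F^×` in `K_n^M(F) ⊗ ℚ`. -/
def MilnorQ.mk {F : Type u} [Field F] {n : ℕ} (x : ⋀[ℚ]^n (UnitsQ F)) : MilnorQ F n :=
  Submodule.Quotient.mk x

end ChowPrelim2

open scoped TensorProduct

universe u

/-!
The exterior algebra of `F(t)^×` is filtered by the degree of the polynomials that occur, and an
element without tame symbols is pushed down this filtration modulo Steinberg elements, as in
Milnor's computation of the K-theory of `F(t)`.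

For monic `f`, `g` of the same degree `d`, the Steinberg element of `f / g` rewrites `f ∧ g` with at
most one factor of degree `d`. Up to terms of lower degree, an element of degree at most `d` is
therefore a sum of terms `q ∧ l_q` with `deg q = d` and `l_q` of lower degree, and its tame symbol
at `q` is the specialization of `l_q` at `q`. When it vanishes, the Steinberg elements of
`h / (f g)`, where `f g ≡ h` modulo `q`, bring `q ∧ l_q` into lower degree, because the kernel of
the specialization is generated by the classes `f + g - h`, written additively.

A Steinberg element `x ∧ (1 - x) ∧ e` with `e` of degree less than `n` has tame symbols in
`B₂ ⊗ Λ` only at points of degree less than `n`. Lifting polynomial representatives shows, by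
induction on the degree of the point, that any such family of symbols is also attained by Steinberg
elements of degree less than `n`. So each Steinberg element that is used can be corrected, without
affecting the leading terms, to have no tame symbols at all, and `∂ a₂ = 0` can be achieved.
-/

namespace TameSymbol

noncomputable section

/-! ### Residues on exterior algebras -/

section ExteriorAlgebra

variable {R M N : Type*} [CommRing R] [AddCommGroup M] [Module R M] [AddCommGroup N] [Module R N]

@[elab_as_elim]
theorem exteriorAlgebra_induction_left {p : ExteriorAlgebra R M → Prop}
    (algebraMap : ∀ r, p (algebraMap R _ r)) (add : ∀ e e', p e → p e' → p (e + e'))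
    (ι_mul : ∀ x e, p e → p (ι R x * e)) (e : ExteriorAlgebra R M) : p e :=
  CliffordAlgebra.left_induction 0 algebraMap add (fun e x he => ι_mul x e he) e

theorem map_ι_mul_map_ι_comm (P Q : Submodule R M) :
    P.map (ι R) * Q.map (ι R) = Q.map (ι R) * P.map (ι R) := by
  have le (P Q : Submodule R M) : P.map (ι R) * Q.map (ι R) ≤ Q.map (ι R) * P.map (ι R) := by
    rw [Submodule.mul_le]
    rintro _ ⟨x, hx, rfl⟩ _ ⟨y, hy, rfl⟩
    rw [eq_neg_of_add_eq_zero_left (ι_add_mul_swap x y)]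
    exact neg_mem (Submodule.mul_mem_mul ⟨y, hy, rfl⟩ ⟨x, hx, rfl⟩)
  exact le_antisymm (le P Q) (le Q P)

/-- The subalgebra `Λ A` of `Λ M` spanned by the wedge products of elements of `A ≤ M`. -/
def exteriorSubalgebra (A : Submodule R M) : Subalgebra R (ExteriorAlgebra R M) :=
  (ExteriorAlgebra.map A.subtype).range

theorem ι_mem_exteriorSubalgebra {A : Submodule R M} {x : M} (hx : x ∈ A) :
    ι R x ∈ exteriorSubalgebra A :=
  ⟨ι R ⟨x, hx⟩, map_apply_ι _ _⟩

theorem map_ι_le_exteriorSubalgebra (A : Submodule R M) :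
    A.map (ι R) ≤ Subalgebra.toSubmodule (exteriorSubalgebra A) := by
  rintro _ ⟨x, hx, rfl⟩
  exact ι_mem_exteriorSubalgebra hx

theorem map_mem_exteriorSubalgebra {A : Submodule R M} {f : N →ₗ[R] M} (hf : ∀ x, f x ∈ A)
    (e : ExteriorAlgebra R N) : ExteriorAlgebra.map f e ∈ exteriorSubalgebra A :=
  ⟨ExteriorAlgebra.map (f.codRestrict A hf) e, by
    rw [AlgHom.toRingHom_eq_coe, RingHom.coe_coe, ← AlgHom.comp_apply, map_comp_map,
      LinearMap.subtype_comp_codRestrict]⟩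

theorem exteriorSubalgebra_mono {A B : Submodule R M} (h : A ≤ B) :
    exteriorSubalgebra A ≤ exteriorSubalgebra B := by
  rintro _ ⟨e, rfl⟩
  exact map_mem_exteriorSubalgebra (fun x => h x.2) e

@[elab_as_elim]
theorem exteriorSubalgebra_induction {A : Submodule R M}
    {p : ∀ e, e ∈ exteriorSubalgebra A → Prop}
    (algebraMap : ∀ r, p (algebraMap R _ r) (algebraMap_mem _ r))
    (add : ∀ e e' he he', p e he → p e' he' → p (e + e') (add_mem he he'))
    (ι_mul : ∀ x (hx : x ∈ A) e he, p e he →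
      p (ι R x * e) (mul_mem (ι_mem_exteriorSubalgebra hx) he))
    (e : ExteriorAlgebra R M) (he : e ∈ exteriorSubalgebra A) : p e he := by
  obtain ⟨e, rfl⟩ := he
  induction e using exteriorAlgebra_induction_left with
  | algebraMap r =>
    have h := algebraMap r
    simpa only [AlgHom.toRingHom_eq_coe, RingHom.coe_coe, AlgHom.commutes] using h
  | add e e' he he' =>
    have h := add _ _ _ _ he he'
    simpa only [AlgHom.toRingHom_eq_coe, RingHom.coe_coe, map_add] using h
  | ι_mul x e he =>
    have h := ι_mul _ x.2 _ _ he
    simpa only [AlgHom.toRingHom_eq_coe, RingHom.coe_coe, map_mul, map_apply_ι,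
      Submodule.subtype_apply] using h

theorem exteriorSubalgebra_le_iSup_pow (A : Submodule R M) :
    Subalgebra.toSubmodule (exteriorSubalgebra A) ≤ ⨆ n : ℕ, A.map (ι R) ^ n := by
  intro e he
  induction e, he using exteriorSubalgebra_induction with
  | algebraMap r =>
    refine Submodule.mem_iSup_of_mem 0 ?_
    rw [pow_zero]
    exact Submodule.algebraMap_mem r
  | add e e' _ _ he he' => exact add_mem he he'
  | ι_mul x hx e _ he =>
    have hxe := Submodule.mul_mem_mul (Submodule.mem_map_of_mem (f := ι R) hx) he
    rw [Submodule.mul_iSup] at hxe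
    exact iSup_le (fun n => (pow_succ' _ n).ge.trans (le_iSup (A.map (ι R) ^ ·) (n + 1))) hxe

theorem map_ι_mul_exteriorSubalgebra_le (A : Submodule R M) :
    A.map (ι R) * Subalgebra.toSubmodule (exteriorSubalgebra A) ≤
      Subalgebra.toSubmodule (exteriorSubalgebra A) :=
  (mul_le_mul_left (map_ι_le_exteriorSubalgebra A) _).trans
    (Subalgebra.isIdempotentElem_toSubmodule _).eq.le

theorem map_ι_mul_map_ι_mul_exteriorSubalgebra_le (A V : Submodule R M) :
    A.map (ι R) * (V.map (ι R) * Subalgebra.toSubmodule (exteriorSubalgebra A)) ≤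
      V.map (ι R) * Subalgebra.toSubmodule (exteriorSubalgebra A) := by
  rw [← mul_assoc, map_ι_mul_map_ι_comm, mul_assoc]
  exact mul_le_mul_right (map_ι_mul_exteriorSubalgebra_le A) _

theorem exteriorSubalgebra_mul_map_ι_le (A V : Submodule R M) :
    Subalgebra.toSubmodule (exteriorSubalgebra A) * V.map (ι R) ≤
      V.map (ι R) * Subalgebra.toSubmodule (exteriorSubalgebra A) := by
  rw [Submodule.mul_le]
  rintro l hl _ ⟨v, hv, rfl⟩
  induction l, hl using exteriorSubalgebra_induction with
  | algebraMap r =>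
    rw [Algebra.commutes]
    exact Submodule.mul_mem_mul ⟨v, hv, rfl⟩ (Subalgebra.algebraMap_mem _ r)
  | add l l' _ _ hl hl' =>
    rw [add_mul]
    exact add_mem hl hl'
  | ι_mul x hx l _ hl =>
    rw [mul_assoc]
    exact map_ι_mul_map_ι_mul_exteriorSubalgebra_le A V
      (Submodule.mul_mem_mul (Submodule.mem_map_of_mem hx) hl)

theorem mem_map_ι_ker_mul_of_map_eq_zero {A : Submodule R M} {s : M →ₗ[R] N} {σ : N →ₗ[R] M}
    (hσ : ∀ y, σ y ∈ A) (hsσ : ∀ y, s (σ y) = y) {e : ExteriorAlgebra R M}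
    (he : e ∈ exteriorSubalgebra A) (hse : ExteriorAlgebra.map s e = 0) :
    e ∈ (A ⊓ LinearMap.ker s).map (ι R) * Subalgebra.toSubmodule (exteriorSubalgebra A) := by
  suffices sub_mem : e - ExteriorAlgebra.map σ (ExteriorAlgebra.map s e) ∈
      (A ⊓ LinearMap.ker s).map (ι R) * Subalgebra.toSubmodule (exteriorSubalgebra A) by
    rwa [hse, map_zero, sub_zero] at sub_mem
  clear hse
  induction e, he using exteriorSubalgebra_induction with
  | algebraMap r =>
    rw [AlgHom.commutes, AlgHom.commutes, sub_self]
    exact zero_mem _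
  | add e e' _ _ he he' =>
    rw [map_add, map_add, add_sub_add_comm]
    exact add_mem he he'
  | ι_mul x hx e hmem he =>
    have split : ι R x * e - ExteriorAlgebra.map σ (ExteriorAlgebra.map s (ι R x * e)) =
        ι R (x - σ (s x)) * e +
          ι R (σ (s x)) * (e - ExteriorAlgebra.map σ (ExteriorAlgebra.map s e)) := by
      simp only [map_mul, map_apply_ι, map_sub, sub_mul, mul_sub, sub_add_sub_cancel]
    have hker : x - σ (s x) ∈ A ⊓ LinearMap.ker s :=
      ⟨sub_mem hx (hσ _), by rw [SetLike.mem_coe, LinearMap.mem_ker, map_sub, hsσ, sub_self]⟩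
    rw [split]
    exact add_mem (Submodule.mul_mem_mul (Submodule.mem_map_of_mem hker) hmem)
      (map_ι_mul_map_ι_mul_exteriorSubalgebra_le A _
        (Submodule.mul_mem_mul (Submodule.mem_map_of_mem (hσ _)) he))

theorem range_ι_pow_succ_eq {π : M} {U : Submodule R M} (hU : R ∙ π ⊔ U = ⊤) (n : ℕ) :
    LinearMap.range (ι R : M →ₗ[R] ExteriorAlgebra R M) ^ (n + 1) =
      LinearMap.range (ι R) * U.map (ι R) ^ n := by
  have hUrange : U.map (ι R) ≤ LinearMap.range (ι R) := LinearMap.map_le_range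
  have sq_le : LinearMap.range (ι R : M →ₗ[R] ExteriorAlgebra R M) * LinearMap.range (ι R) ≤
      LinearMap.range (ι R) * U.map (ι R) := by
    nth_rewrite 1 2 [LinearMap.range_eq_map]
    rw [← hU, Submodule.map_sup, Submodule.sup_mul, Submodule.mul_sup]
    refine sup_le (sup_le ?_ ?_) ?_
    · rw [Submodule.map_span, Set.image_singleton, Submodule.span_mul_span,
        Set.singleton_mul_singleton, ι_sq_zero, Submodule.span_zero_singleton]
      exact bot_le
    · exact mul_le_mul_left LinearMap.map_le_range _
    · rw [← Submodule.map_sup, map_ι_mul_map_ι_comm]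
      exact mul_le_mul_left LinearMap.map_le_range _
  refine le_antisymm ?_ ?_
  · induction n with
    | zero => rw [pow_zero, mul_one, pow_one]
    | succ n ih =>
      calc LinearMap.range (ι R : M →ₗ[R] ExteriorAlgebra R M) ^ (n + 2)
          = LinearMap.range (ι R) * LinearMap.range (ι R) ^ (n + 1) := pow_succ' _ _
        _ ≤ LinearMap.range (ι R) * LinearMap.range (ι R) * U.map (ι R) ^ n := by
          rw [mul_assoc]; exact mul_le_mul_right ih _
        _ ≤ LinearMap.range (ι R) * U.map (ι R) * U.map (ι R) ^ n :=
          mul_le_mul_left sq_le _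
        _ = LinearMap.range (ι R) * U.map (ι R) ^ (n + 1) := by rw [mul_assoc, ← pow_succ']
  · rw [pow_succ']
    exact mul_le_mul_right (pow_le_pow_left' hUrange n) _

theorem exteriorPower_succ_eq_span {π : M} {X U : Set M} (hX : Submodule.span R X = ⊤)
    (hU : R ∙ π ⊔ Submodule.span R U = ⊤) (n : ℕ) :
    ⋀[R]^(n + 1) M = Submodule.span R
      {e | ∃ x ∈ X, ∃ u : Fin n → M, (∀ i, u i ∈ U) ∧ e = ιMulti R (n + 1) (Fin.cons x u)} := by
  change LinearMap.range (ι R) ^ (n + 1) = _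
  rw [range_ι_pow_succ_eq hU, LinearMap.range_eq_map, ← hX, Submodule.map_span,
    Submodule.map_span, Submodule.span_pow, Submodule.span_mul_span]
  congr 1
  ext e
  simp only [Set.mem_mul, Set.mem_pow, Set.mem_image, Set.mem_ofPred_eq, ιMulti_apply,
    List.ofFn_succ, List.prod_cons, Fin.cons_zero, Fin.cons_succ]
  constructor
  · rintro ⟨_, ⟨x, hx, rfl⟩, _, ⟨f, rfl⟩, rfl⟩
    choose u hu hf using fun i => (f i).2
    exact ⟨x, hx, u, hu, by simp only [hf]⟩
  · rintro ⟨x, hx, u, hu, rfl⟩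
    exact ⟨_, ⟨x, hx, rfl⟩, _, ⟨fun i => ⟨_, u i, hu i, rfl⟩, rfl⟩, rfl⟩

variable (ν : Module.Dual R M) (s : M →ₗ[R] N)

/-- The residue `Λ M → Λ N` of degree `-1` attached to a valuation `ν : M → R` and a
specialization `s : M → N`: the contraction with `ν` followed by `Λ s`. -/
def residue : ExteriorAlgebra R M →ₗ[R] ExteriorAlgebra R N :=
  (ExteriorAlgebra.map s).toLinearMap ∘ₗ CliffordAlgebra.contractLeft (Q := 0) ν

theorem residue_algebraMap (r : R) : residue ν s (algebraMap R _ r) = 0 := by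
  rw [residue, LinearMap.comp_apply]
  simp [CliffordAlgebra.contractLeft_algebraMap]

theorem residue_ι_mul (x : M) (e : ExteriorAlgebra R M) :
    residue ν s (ι R x * e) =
      ν x • ExteriorAlgebra.map s e - ι R (s x) * residue ν s e := by
  simp only [residue, LinearMap.comp_apply, AlgHom.toLinearMap_apply]
  rw [CliffordAlgebra.contractLeft_ι_mul, map_sub, map_smul, map_mul, map_apply_ι]

theorem residue_eq_zero {A : Submodule R M} (hν : ∀ x ∈ A, ν x = 0) {e : ExteriorAlgebra R M}
    (he : e ∈ exteriorSubalgebra A) : residue ν s e = 0 := by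
  induction e, he using exteriorSubalgebra_induction with
  | algebraMap r => exact residue_algebraMap ν s r
  | add e e' _ _ he he' => rw [map_add, he, he', add_zero]
  | ι_mul x hx e _ he => rw [residue_ι_mul, hν x hx, he, zero_smul, mul_zero, sub_zero]

/-- The projection of `Λ M` onto its homogeneous component of degree `n`. -/
def degPart (n : ℕ) : ExteriorAlgebra R M →ₗ[R] ⋀[R]^n M :=
  DirectSum.component R ℕ (fun i => ⋀[R]^i M) n ∘ₗ
    (DirectSum.decomposeLinearEquiv fun i => ⋀[R]^i M).toLinearMap

theorem degPart_coe {n : ℕ} (b : ⋀[R]^n M) : degPart n (b : ExteriorAlgebra R M) = b :=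
  Subtype.ext (DirectSum.decompose_of_mem_same (fun i => ⋀[R]^i M) b.2)

theorem degPart_algebraMap_zero (r : R) :
    (degPart 0 (algebraMap R (ExteriorAlgebra R M) r) : ExteriorAlgebra R M) =
      algebraMap R _ r :=
  DirectSum.decompose_of_mem_same (fun i => ⋀[R]^i M) (SetLike.algebraMap_mem_graded _ r)

theorem degPart_algebraMap_succ (n : ℕ) (r : R) :
    degPart (n + 1) (algebraMap R (ExteriorAlgebra R M) r) = 0 :=
  Subtype.ext (DirectSum.decompose_of_mem_ne (fun i => ⋀[R]^i M)
    (SetLike.algebraMap_mem_graded _ r) n.succ_ne_zero.symm)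

theorem ι_mem_exteriorPower_one (x : M) : ι R x ∈ ⋀[R]^1 M := by
  change ι R x ∈ LinearMap.range (ι R) ^ 1
  rw [pow_one]
  exact LinearMap.mem_range_self _ x

theorem degPart_zero_ι_mul (x : M) (e : ExteriorAlgebra R M) : degPart 0 (ι R x * e) = 0 :=
  Subtype.ext (DirectSum.coe_decompose_mul_of_left_mem_of_not_le (fun i => ⋀[R]^i M)
    (ι_mem_exteriorPower_one x) Nat.one_pos.not_ge)

theorem degPart_succ_ι_mul (n : ℕ) (x : M) (e : ExteriorAlgebra R M) :
    (degPart (n + 1) (ι R x * e) : ExteriorAlgebra R M) = ι R x * degPart n e := by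
  rw [add_comm]
  exact DirectSum.coe_decompose_mul_add_of_left_mem (fun i => ⋀[R]^i M)
    (ι_mem_exteriorPower_one x)

theorem coe_degPart_map (n : ℕ) (e : ExteriorAlgebra R M) :
    (degPart n (ExteriorAlgebra.map s e) : ExteriorAlgebra R N) =
      ExteriorAlgebra.map s (degPart n e : ExteriorAlgebra R M) := by
  induction e using exteriorAlgebra_induction_left generalizing n with
  | algebraMap r =>
    cases n
    · simp only [AlgHom.commutes, degPart_algebraMap_zero]
    · simp only [AlgHom.commutes, degPart_algebraMap_succ, ZeroMemClass.coe_zero, map_zero]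
  | add e e' he he' => simp only [map_add, Submodule.coe_add, he, he']
  | ι_mul x e he =>
    rw [map_mul, map_apply_ι]
    cases n
    · simp only [degPart_zero_ι_mul, ZeroMemClass.coe_zero, map_zero]
    · simp only [degPart_succ_ι_mul, map_mul, map_apply_ι, he]

theorem residue_degPart_zero (e : ExteriorAlgebra R M) :
    residue ν s (degPart 0 e : ExteriorAlgebra R M) = 0 := by
  have hmem : (degPart 0 e : ExteriorAlgebra R M) ∈ (1 : Submodule R (ExteriorAlgebra R M)) :=
    (pow_zero (LinearMap.range (ι R))).le (degPart 0 e).2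
  obtain ⟨r, hr⟩ := Submodule.mem_one.1 hmem
  rw [← hr, residue_algebraMap]

theorem coe_degPart_residue (n : ℕ) (e : ExteriorAlgebra R M) :
    (degPart n (residue ν s e) : ExteriorAlgebra R N) =
      residue ν s (degPart (n + 1) e : ExteriorAlgebra R M) := by
  induction e using exteriorAlgebra_induction_left generalizing n with
  | algebraMap r =>
    simp only [residue_algebraMap, degPart_algebraMap_succ, ZeroMemClass.coe_zero, map_zero]
  | add e e' he he' => simp only [map_add, Submodule.coe_add, he, he']
  | ι_mul x e he =>
    rw [degPart_succ_ι_mul, residue_ι_mul, residue_ι_mul, map_sub, map_smul, Submodule.coe_sub,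
      Submodule.coe_smul, coe_degPart_map]
    congr 1
    cases n
    · rw [degPart_zero_ι_mul, residue_degPart_zero, mul_zero, ZeroMemClass.coe_zero]
    · rw [degPart_succ_ι_mul, he]

end ExteriorAlgebra

/-! ### Discrete valuations and tame symbols -/

section UnitsQ

variable {K : Type u} [Field K]

theorem mkQ_zero : mkQ (0 : K) = 0 := dif_pos rfl

theorem mkQ_of_ne_zero {x : K} (hx : x ≠ 0) :
    mkQ x = (1 : ℚ) ⊗ₜ[ℤ] Additive.ofMul (Units.mk0 x hx) := dif_neg hx

theorem mkQ_units (x : Kˣ) : mkQ (x : K) = (1 : ℚ) ⊗ₜ[ℤ] Additive.ofMul x := by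
  rw [mkQ_of_ne_zero x.ne_zero, Units.mk0_val]

theorem mkQ_mul {x y : K} (hx : x ≠ 0) (hy : y ≠ 0) : mkQ (x * y) = mkQ x + mkQ y := by
  lift x to Kˣ using hx.isUnit
  lift y to Kˣ using hy.isUnit
  rw [← Units.val_mul, mkQ_units, mkQ_units, mkQ_units, ofMul_mul, TensorProduct.tmul_add]

theorem mkQ_one : mkQ (1 : K) = 0 := by
  rw [← Units.val_one, mkQ_units, ofMul_one, TensorProduct.tmul_zero]

theorem mkQ_inv {x : K} (hx : x ≠ 0) : mkQ x⁻¹ = -mkQ x := by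
  lift x to Kˣ using hx.isUnit
  rw [← Units.val_inv_eq_inv_val, mkQ_units, mkQ_units, ofMul_inv, TensorProduct.tmul_neg]

theorem mkQ_div {x y : K} (hx : x ≠ 0) (hy : y ≠ 0) : mkQ (x / y) = mkQ x - mkQ y := by
  rw [div_eq_mul_inv, mkQ_mul hx (inv_ne_zero hy), mkQ_inv hy, sub_eq_add_neg]

theorem mkQ_neg (x : K) : mkQ (-x) = mkQ x := by
  rcases eq_or_ne x 0 with rfl | hx
  · rw [neg_zero]
  have two_smul_eq : (2 : ℚ) • mkQ (-x) = (2 : ℚ) • mkQ x := by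
    rw [two_smul, two_smul, ← mkQ_mul hx hx, ← mkQ_mul (neg_ne_zero.2 hx) (neg_ne_zero.2 hx),
      neg_mul_neg]
  exact smul_right_injective _ two_ne_zero two_smul_eq

theorem mkQ_zpow {x : K} (hx : x ≠ 0) (n : ℤ) : mkQ (x ^ n) = (n : ℚ) • mkQ x := by
  lift x to Kˣ using hx.isUnit
  rw [← Units.val_zpow_eq_zpow_val, mkQ_units, mkQ_units, ofMul_zpow, Int.cast_smul_eq_zsmul]
  exact map_zsmul (TensorProduct.mk ℤ ℚ (Additive Kˣ) 1) n _

theorem span_mkQ_eq_top : Submodule.span ℚ {v : UnitsQ K | ∃ x : K, x ≠ 0 ∧ v = mkQ x} = ⊤ := by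
  rw [Submodule.eq_top_iff']
  intro v
  induction v using TensorProduct.induction_on with
  | zero => exact zero_mem _
  | add v w hv hw => exact add_mem hv hw
  | tmul r y =>
    have hr : r ⊗ₜ[ℤ] y = r • mkQ ((y.toMul : Kˣ) : K) := by
      rw [mkQ_units, TensorProduct.smul_tmul', smul_eq_mul, mul_one, ofMul_toMul]
    rw [hr]
    exact Submodule.smul_mem _ _ (Submodule.subset_span ⟨_, Units.ne_zero _, rfl⟩)

theorem unitsQMap_mkQ {K' : Type u} [Field K'] (j : K →+* K') (x : K) :
    unitsQMap j (mkQ x) = mkQ (j x) := by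
  rcases eq_or_ne x 0 with rfl | hx
  · rw [map_zero, mkQ_zero, mkQ_zero, map_zero]
  lift x to Kˣ using hx.isUnit
  change _ = mkQ ((Units.map (j : K →* K') x : K'ˣ) : K')
  rw [mkQ_units, mkQ_units, unitsQMap, LinearMap.baseChange_tmul]
  rfl

/-- The linear extension to `K^× ⊗ ℚ` of a function that is additive on nonzero products. -/
def liftQ {V : Type*} [AddCommGroup V] [Module ℚ V] (g : K → V)
    (hg : ∀ x y, x ≠ 0 → y ≠ 0 → g (x * y) = g x + g y) : UnitsQ K →ₗ[ℚ] V :=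
  LinearMap.liftBaseChange ℚ (AddMonoidHom.mk' (fun x : Additive Kˣ => g (x.toMul : Kˣ))
    fun x y => hg _ _ x.toMul.ne_zero y.toMul.ne_zero).toIntLinearMap

theorem liftQ_mkQ {V : Type*} [AddCommGroup V] [Module ℚ V] {g : K → V}
    (hg : ∀ x y, x ≠ 0 → y ≠ 0 → g (x * y) = g x + g y) {x : K} (hx : x ≠ 0) :
    liftQ g hg (mkQ x) = g x := by
  rw [mkQ_of_ne_zero hx, liftQ, LinearMap.liftBaseChange_tmul, one_smul]
  rfl

end UnitsQ

end

end TameSymbol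

namespace IsDVal

variable {K : Type u} [Field K] {ν : K → ℤ}

theorem map_one (hν : IsDVal ν) : ν 1 = 0 := by
  have h := hν.map_mul 1 1 one_ne_zero one_ne_zero
  rw [mul_one] at h
  lia

theorem map_neg (hν : IsDVal ν) {x : K} (hx : x ≠ 0) : ν (-x) = ν x := by
  have h := hν.map_mul (-x) (-x) (neg_ne_zero.2 hx) (neg_ne_zero.2 hx)
  rw [neg_mul_neg, hν.map_mul x x hx hx] at h
  lia

theorem map_inv (hν : IsDVal ν) {x : K} (hx : x ≠ 0) : ν x⁻¹ = -ν x := by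
  have h := hν.map_mul x x⁻¹ hx (inv_ne_zero hx)
  rw [mul_inv_cancel₀ hx, hν.map_one] at h
  lia

theorem map_div (hν : IsDVal ν) {x y : K} (hx : x ≠ 0) (hy : y ≠ 0) : ν (x / y) = ν x - ν y := by
  rw [div_eq_mul_inv, hν.map_mul _ _ hx (inv_ne_zero hy), hν.map_inv hy, sub_eq_add_neg]

theorem map_zpow (hν : IsDVal ν) {x : K} (hx : x ≠ 0) (n : ℤ) : ν (x ^ n) = n * ν x := by
  induction n using Int.induction_on with
  | zero => rw [zpow_zero, hν.map_one, zero_mul]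
  | succ n ih => rw [zpow_add_one₀ hx, hν.map_mul _ _ (zpow_ne_zero _ hx) hx, ih]; ring
  | pred n ih =>
    rw [zpow_sub_one₀ hx, hν.map_mul _ _ (zpow_ne_zero _ hx) (inv_ne_zero hx), ih, hν.map_inv hx]
    ring

theorem nonneg_add (hν : IsDVal ν) {x y : K} (hx : x = 0 ∨ 0 ≤ ν x) (hy : y = 0 ∨ 0 ≤ ν y) :
    x + y = 0 ∨ 0 ≤ ν (x + y) := by
  rcases eq_or_ne x 0 with rfl | hx0
  · rwa [zero_add]
  rcases eq_or_ne y 0 with rfl | hy0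
  · rwa [add_zero]
  refine or_iff_not_imp_left.2 fun hxy => ?_
  exact (le_min (hx.resolve_left hx0) (hy.resolve_left hy0)).trans (hν.map_add x y hx0 hy0 hxy)

end IsDVal

namespace TameSymbol

noncomputable section

/-- A discrete valuation `ν` of `K` with a residue map onto `κ` and a chosen uniformizer. -/
structure Place (K κ : Type u) [Field K] [Field κ] where
  ν : K → ℤ
  isDVal : IsDVal ν
  res : K → κ
  isResidue : IsResidue ν res
  uniformizer : K
  uniformizer_ne_zero : uniformizer ≠ 0
  ν_uniformizer : ν uniformizer = 1

namespace Place

variable {K κ : Type u} [Field K] [Field κ] (P : Place K κ)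

theorem res_zero : P.res 0 = 0 := (P.isResidue.zero_iff 0 (.inl rfl)).2 (.inl rfl)

theorem res_ne_zero {x : K} (hx : x ≠ 0) (hν : P.ν x = 0) : P.res x ≠ 0 := by
  rw [Ne, P.isResidue.zero_iff x (.inr hν.ge), hν]
  simp [hx]

theorem res_one_sub {x : K} (hx : x = 0 ∨ 0 ≤ P.ν x) : P.res (1 - x) = 1 - P.res x := by
  have h := P.isResidue.map_add (1 - x) x ?_ hx
  · rw [sub_add_cancel, P.isResidue.map_one] at h
    exact eq_sub_of_add_eq h.symm
  · rw [sub_eq_add_neg]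
    refine P.isDVal.nonneg_add (.inr P.isDVal.map_one.ge) ?_
    rcases eq_or_ne x 0 with rfl | hx0
    · exact .inl neg_zero
    · exact .inr ((hx.resolve_left hx0).trans_eq (P.isDVal.map_neg hx0).symm)

/-- The unit `x / π ^ ν x`. -/
def unitPart (x : K) : K := x / P.uniformizer ^ P.ν x

theorem unitPart_ne_zero {x : K} (hx : x ≠ 0) : P.unitPart x ≠ 0 :=
  div_ne_zero hx (zpow_ne_zero _ P.uniformizer_ne_zero)

theorem ν_unitPart {x : K} (hx : x ≠ 0) : P.ν (P.unitPart x) = 0 := by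
  rw [unitPart, P.isDVal.map_div hx (zpow_ne_zero _ P.uniformizer_ne_zero),
    P.isDVal.map_zpow P.uniformizer_ne_zero, P.ν_uniformizer, mul_one, sub_self]

theorem mkQ_eq_smul_add_unitPart {x : K} (hx : x ≠ 0) :
    mkQ x = (P.ν x : ℚ) • mkQ P.uniformizer + mkQ (P.unitPart x) := by
  rw [unitPart, mkQ_div hx (zpow_ne_zero _ P.uniformizer_ne_zero),
    mkQ_zpow P.uniformizer_ne_zero, add_sub_cancel]

theorem unitPart_mul {x y : K} (hx : x ≠ 0) (hy : y ≠ 0) :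
    P.unitPart (x * y) = P.unitPart x * P.unitPart y := by
  rw [unitPart, P.isDVal.map_mul x y hx hy, zpow_add₀ P.uniformizer_ne_zero, unitPart, unitPart,
    mul_div_mul_comm]

/-- The valuation `K^× ⊗ ℚ → ℚ`. -/
def val : Module.Dual ℚ (UnitsQ K) :=
  liftQ (fun x => (P.ν x : ℚ)) fun x y hx hy => by
    rw [P.isDVal.map_mul x y hx hy, Int.cast_add]

theorem val_mkQ {x : K} (hx : x ≠ 0) : P.val (mkQ x) = P.ν x := liftQ_mkQ _ hx

/-- The specialization `K^× ⊗ ℚ → κ^× ⊗ ℚ` which kills the chosen uniformizer. -/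
def spec : UnitsQ K →ₗ[ℚ] UnitsQ κ :=
  liftQ (fun x => mkQ (P.res (P.unitPart x))) fun x y hx hy => by
    have hνx := P.ν_unitPart hx
    have hνy := P.ν_unitPart hy
    rw [P.unitPart_mul hx hy, P.isResidue.map_mul _ _ (.inr hνx.ge) (.inr hνy.ge),
      mkQ_mul (P.res_ne_zero (P.unitPart_ne_zero hx) hνx)
        (P.res_ne_zero (P.unitPart_ne_zero hy) hνy)]

theorem spec_mkQ {x : K} (hx : x ≠ 0) (hν : P.ν x = 0) : P.spec (mkQ x) = mkQ (P.res x) := by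
  rw [spec, liftQ_mkQ _ hx, unitPart, hν, zpow_zero, div_one]

/-- The tame symbol `Λ (K^× ⊗ ℚ) → Λ (κ^× ⊗ ℚ)` in all degrees at once. -/
def tame : ExteriorAlgebra ℚ (UnitsQ K) →ₗ[ℚ] ExteriorAlgebra ℚ (UnitsQ κ) :=
  residue P.val P.spec

theorem tame_ι_mul (v : UnitsQ K) (e : ExteriorAlgebra ℚ (UnitsQ K)) :
    P.tame (ι ℚ v * e) =
      P.val v • ExteriorAlgebra.map P.spec e - ι ℚ (P.spec v) * P.tame e :=
  residue_ι_mul _ _ v e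

theorem tame_ι_mul_of_mem {A : Submodule ℚ (UnitsQ K)} (hA : ∀ v ∈ A, P.val v = 0) (v : UnitsQ K)
    {e : ExteriorAlgebra ℚ (UnitsQ K)} (he : e ∈ exteriorSubalgebra A) :
    P.tame (ι ℚ v * e) = P.val v • ExteriorAlgebra.map P.spec e := by
  rw [tame_ι_mul, tame, residue_eq_zero _ _ hA he, mul_zero, sub_zero]

theorem tame_wedgeF_cons {n : ℕ} {π : K} {u : Fin n → K} (hπ : π ≠ 0) (hνπ : P.ν π = 1)
    (hu : ∀ i, u i ≠ 0 ∧ P.ν (u i) = 0) :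
    P.tame (wedgeF (n + 1) (Fin.cons π u) : ExteriorAlgebra ℚ (UnitsQ K)) =
      wedgeF n (fun i => P.res (u i)) := by
  have tail_mem : ιMulti ℚ n (fun i => mkQ (u i)) ∈
      exteriorSubalgebra (LinearMap.ker P.val) := by
    rw [ιMulti_apply]
    refine Subalgebra.list_prod_mem _ fun e he => ?_
    obtain ⟨i, rfl⟩ := List.mem_ofFn.1 he
    refine ι_mem_exteriorSubalgebra ?_
    rw [LinearMap.mem_ker, P.val_mkQ (hu i).1, (hu i).2, Int.cast_zero]
  have cons_eq : (wedgeF (n + 1) (Fin.cons π u) : ExteriorAlgebra ℚ (UnitsQ K)) =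
      ι ℚ (mkQ π) * ιMulti ℚ n (fun i => mkQ (u i)) := ιMulti_succ_apply _
  rw [cons_eq, P.tame_ι_mul_of_mem (fun _ hv => hv) _ tail_mem, P.val_mkQ hπ, hνπ, Int.cast_one,
    one_smul, map_apply_ιMulti]
  exact congrArg (ιMulti ℚ n) (funext fun i => P.spec_mkQ (hu i).1 (hu i).2)

theorem span_uniformizers_eq_top :
    Submodule.span ℚ {v | ∃ π : K, (π ≠ 0 ∧ P.ν π = 1) ∧ v = mkQ π} = ⊤ := by
  rw [eq_top_iff, ← span_mkQ_eq_top, Submodule.span_le]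
  rintro _ ⟨x, hx, rfl⟩
  have uniformizer_mem : mkQ P.uniformizer ∈
      Submodule.span ℚ {v | ∃ π : K, (π ≠ 0 ∧ P.ν π = 1) ∧ v = mkQ π} :=
    Submodule.subset_span ⟨_, ⟨P.uniformizer_ne_zero, P.ν_uniformizer⟩, rfl⟩
  have mul_ne_zero := mul_ne_zero P.uniformizer_ne_zero (P.unitPart_ne_zero hx)
  have unitPart_eq : mkQ (P.unitPart x) =
      mkQ (P.uniformizer * P.unitPart x) - mkQ P.uniformizer := by
    rw [mkQ_mul P.uniformizer_ne_zero (P.unitPart_ne_zero hx), add_sub_cancel_left]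
  rw [P.mkQ_eq_smul_add_unitPart hx, unitPart_eq]
  refine add_mem (Submodule.smul_mem _ _ uniformizer_mem)
    (sub_mem (Submodule.subset_span ⟨_, ⟨mul_ne_zero, ?_⟩, rfl⟩) uniformizer_mem)
  rw [P.isDVal.map_mul _ _ P.uniformizer_ne_zero (P.unitPart_ne_zero hx), P.ν_uniformizer,
    P.ν_unitPart hx, add_zero]

theorem span_uniformizer_sup_span_units_eq_top :
    ℚ ∙ mkQ P.uniformizer ⊔ Submodule.span ℚ {v | ∃ u : K, (u ≠ 0 ∧ P.ν u = 0) ∧ v = mkQ u} =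
      ⊤ := by
  rw [eq_top_iff, ← span_mkQ_eq_top, Submodule.span_le]
  rintro _ ⟨x, hx, rfl⟩
  rw [P.mkQ_eq_smul_add_unitPart hx]
  exact Submodule.add_mem_sup (Submodule.smul_mem _ _ (Submodule.mem_span_singleton_self _))
    (Submodule.subset_span ⟨_, ⟨P.unitPart_ne_zero hx, P.ν_unitPart hx⟩, rfl⟩)

theorem eq_tame_of_wedgeF_cons {n : ℕ}
    (D : ⋀[ℚ]^(n + 1) (UnitsQ K) →ₗ[ℚ] ExteriorAlgebra ℚ (UnitsQ κ))
    (hD : ∀ (π : K) (u : Fin n → K), π ≠ 0 → P.ν π = 1 → (∀ i, u i ≠ 0 ∧ P.ν (u i) = 0) →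
      D (wedgeF (n + 1) (Fin.cons π u)) = wedgeF n (fun i => P.res (u i)))
    (b : ⋀[ℚ]^(n + 1) (UnitsQ K)) : D b = P.tame b := by
  have span_eq := exteriorPower_succ_eq_span P.span_uniformizers_eq_top
    P.span_uniformizer_sup_span_units_eq_top n
  suffices ∀ e (he : e ∈ ⋀[ℚ]^(n + 1) (UnitsQ K)), D ⟨e, he⟩ = P.tame e from this b b.2
  intro e he
  have he' := span_eq.le he
  induction he' using Submodule.span_induction with
  | zero => rw [map_zero]; exact map_zero D
  | smul r e he' ih => rw [map_smul, ← ih (span_eq.ge he')]; exact map_smul D r ⟨e, _⟩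
  | add e e' he₁ he₂ ih ih' =>
    rw [map_add, ← ih (span_eq.ge he₁), ← ih' (span_eq.ge he₂)]
    exact map_add D ⟨e, _⟩ ⟨e', _⟩
  | mem e hmem =>
    obtain ⟨_, ⟨π, ⟨hπ, hνπ⟩, rfl⟩, v, hv, rfl⟩ := hmem
    choose u hu hv using hv
    obtain rfl : v = fun i => mkQ (u i) := funext hv
    have cons_eq : ιMulti ℚ (n + 1) (Fin.cons (mkQ π) fun i => mkQ (u i)) =
        (wedgeF (n + 1) (Fin.cons π u) : ExteriorAlgebra ℚ (UnitsQ K)) :=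
      congrArg (ιMulti ℚ (n + 1)) (funext fun i => Fin.cases rfl (fun _ => rfl) i)
    simp only [cons_eq]
    rw [P.tame_wedgeF_cons hπ hνπ hu, ← hD π u hπ hνπ hu]

theorem coe_eq_tame_of_isTame {n : ℕ} {D : ⋀[ℚ]^(n + 1) (UnitsQ K) →ₗ[ℚ] ⋀[ℚ]^n (UnitsQ κ)}
    (hD : IsTame P.ν P.res n D) (b : ⋀[ℚ]^(n + 1) (UnitsQ K)) :
    (D b : ExteriorAlgebra ℚ (UnitsQ κ)) = P.tame b :=
  P.eq_tame_of_wedgeF_cons ((⋀[ℚ]^n (UnitsQ κ)).subtype ∘ₗ D)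
    (fun π u hπ hνπ hu => congrArg Subtype.val (hD π u hπ hνπ hu)) b

theorem ι_eq_tame_of_isTame2U {D : ⋀[ℚ]^2 (UnitsQ K) →ₗ[ℚ] UnitsQ κ}
    (hD : IsTame2U P.ν P.res D) (b : ⋀[ℚ]^2 (UnitsQ K)) : ι ℚ (D b) = P.tame b := by
  refine P.eq_tame_of_wedgeF_cons (ι ℚ ∘ₗ D) (fun π u hπ hνπ hu => ?_) b
  have cons_eq : (Fin.cons π u : Fin 2 → K) = ![π, u 0] := by
    ext i
    fin_cases i <;> rfl
  rw [LinearMap.comp_apply, cons_eq, hD π (u 0) hπ hνπ (hu 0).1 (hu 0).2]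
  simp [wedgeF, ιMulti_apply]

end Place

/-! ### Steinberg elements and their tame symbols -/

/-- The Steinberg map `{x} ⊗ e ↦ x ∧ (1 - x) ∧ e`, where the free module on `K` with coefficients
in `Λ (K^× ⊗ ℚ)` stands for `⨁ₙ ℚ[K] ⊗ Λⁿ K^×`. -/
def steinberg (K : Type u) [Field K] :
    (K →₀ ExteriorAlgebra ℚ (UnitsQ K)) →ₗ[ℚ] ExteriorAlgebra ℚ (UnitsQ K) :=
  Finsupp.lsum ℚ fun x => LinearMap.mulLeft ℚ (ι ℚ (mkQ x) * ι ℚ (mkQ (1 - x)))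

theorem steinberg_single {K : Type u} [Field K] (x : K) (e : ExteriorAlgebra ℚ (UnitsQ K)) :
    steinberg K (Finsupp.single x e) = ι ℚ (mkQ x) * ι ℚ (mkQ (1 - x)) * e := by
  rw [steinberg, Finsupp.lsum_single, LinearMap.mulLeft_apply]

namespace Place

variable {K κ : Type u} [Field K] [Field κ] (P : Place K κ)

open Classical in
/-- The lift of the tame symbol to the source of the Steinberg map: `{x} ⊗ e` goes to
`{x̄} ⊗ ∂ e` when `x` is zero or a unit, and to zero otherwise. -/
def blochTame :
    (K →₀ ExteriorAlgebra ℚ (UnitsQ K)) →ₗ[ℚ] (κ →₀ ExteriorAlgebra ℚ (UnitsQ κ)) :=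
  Finsupp.lsum ℚ fun x =>
    if x = 0 ∨ P.ν x = 0 then Finsupp.lsingle (P.res x) ∘ₗ P.tame else 0

theorem blochTame_single {x : K} (hx : x = 0 ∨ P.ν x = 0) (e : ExteriorAlgebra ℚ (UnitsQ K)) :
    P.blochTame (Finsupp.single x e) = Finsupp.single (P.res x) (P.tame e) := by
  rw [blochTame, Finsupp.lsum_single, if_pos hx, LinearMap.comp_apply, Finsupp.lsingle_apply]

theorem blochTame_single_of_ne {x : K} (hx : x ≠ 0) (hν : P.ν x ≠ 0)
    (e : ExteriorAlgebra ℚ (UnitsQ K)) : P.blochTame (Finsupp.single x e) = 0 := by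
  rw [blochTame, Finsupp.lsum_single, if_neg (not_or_intro hx hν), LinearMap.zero_apply]

theorem blochTame_single_eq_zero (x : K) {e : ExteriorAlgebra ℚ (UnitsQ K)} (he : P.tame e = 0) :
    P.blochTame (Finsupp.single x e) = 0 := by
  by_cases hx : x = 0 ∨ P.ν x = 0
  · rw [P.blochTame_single hx, he, Finsupp.single_zero]
  · rw [not_or] at hx
    exact P.blochTame_single_of_ne hx.1 hx.2 e

theorem tame_ι_mul_ι_mul (v w : UnitsQ K) (e : ExteriorAlgebra ℚ (UnitsQ K)) :
    P.tame (ι ℚ v * ι ℚ w * e) =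
      ι ℚ (P.val v • P.spec w - P.val w • P.spec v) * ExteriorAlgebra.map P.spec e +
        ι ℚ (P.spec v) * ι ℚ (P.spec w) * P.tame e := by
  rw [mul_assoc, tame_ι_mul, tame_ι_mul, map_mul, map_apply_ι, map_sub, map_smul, map_smul]
  simp only [mul_sub, sub_mul, smul_mul_assoc, mul_smul_comm, mul_assoc]
  abel

theorem one_sub_of_pos {x : K} (hx : x ≠ 0) (hν : 0 < P.ν x) :
    1 - x ≠ 0 ∧ P.ν (1 - x) = 0 ∧ P.res (1 - x) = 1 := by
  have res_eq : P.res (1 - x) = 1 := by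
    rw [P.res_one_sub (.inr hν.le), (P.isResidue.zero_iff x (.inr hν.le)).2 (.inr hν), sub_zero]
  have ne_zero : 1 - x ≠ 0 := by
    intro h
    rw [h, P.res_zero] at res_eq
    exact zero_ne_one res_eq
  have nonneg : 0 ≤ P.ν (1 - x) := by
    have h := P.isDVal.map_add 1 (-x) one_ne_zero (neg_ne_zero.2 hx) (by rwa [← sub_eq_add_neg])
    rwa [P.isDVal.map_one, P.isDVal.map_neg hx, min_eq_left hν.le, ← sub_eq_add_neg] at h
  refine ⟨ne_zero, nonneg.antisymm' (not_lt.1 fun hpos => ?_), res_eq⟩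
  rw [(P.isResidue.zero_iff _ (.inr nonneg)).2 (.inr hpos)] at res_eq
  exact zero_ne_one res_eq

theorem val_one_sub_of_pos {x : K} (hx : x ≠ 0) (hν : 0 < P.ν x) :
    P.val (mkQ (1 - x)) = 0 ∧ P.spec (mkQ (1 - x)) = 0 := by
  obtain ⟨hne, hν, hres⟩ := P.one_sub_of_pos hx hν
  rw [P.val_mkQ hne, P.spec_mkQ hne hν, hν, hres, mkQ_one]
  exact ⟨Int.cast_zero, rfl⟩

theorem tame_steinberg_of_ne {x : K} (hx : x ≠ 0) (hν : P.ν x ≠ 0)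
    (e : ExteriorAlgebra ℚ (UnitsQ K)) :
    P.tame (ι ℚ (mkQ x) * ι ℚ (mkQ (1 - x)) * e) = 0 := by
  rw [tame_ι_mul_ι_mul]
  rcases hν.lt_or_gt with hneg | hpos
  · have one_sub_inv := P.val_one_sub_of_pos (inv_ne_zero hx) (by rw [P.isDVal.map_inv hx]; lia)
    have one_sub_inv_ne := P.one_sub_of_pos (inv_ne_zero hx) (by rw [P.isDVal.map_inv hx]; lia)
    have one_sub_eq : 1 - x = -x * (1 - x⁻¹) := by field_simp; ring
    have mkQ_one_sub : mkQ (1 - x) = mkQ x + mkQ (1 - x⁻¹) := by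
      rw [one_sub_eq, mkQ_mul (neg_ne_zero.2 hx) one_sub_inv_ne.1, mkQ_neg]
    rw [mkQ_one_sub, map_add, map_add, one_sub_inv.1, one_sub_inv.2, add_zero, add_zero, sub_self,
      map_zero, zero_mul, ι_sq_zero, zero_mul, add_zero]
  · obtain ⟨hval, hspec⟩ := P.val_one_sub_of_pos hx hpos
    rw [hval, hspec, smul_zero, zero_smul, sub_zero, map_zero, zero_mul, mul_zero, zero_mul,
      add_zero]

theorem tame_steinberg_of_unit {x : K} (hx : x ≠ 0) (hν : P.ν x = 0)
    (e : ExteriorAlgebra ℚ (UnitsQ K)) :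
    P.tame (ι ℚ (mkQ x) * ι ℚ (mkQ (1 - x)) * e) =
      ι ℚ (mkQ (P.res x)) * ι ℚ (mkQ (1 - P.res x)) * P.tame e := by
  have val_x : P.val (mkQ x) = 0 := by rw [P.val_mkQ hx, hν, Int.cast_zero]
  have spec_x : P.spec (mkQ x) = mkQ (P.res x) := P.spec_mkQ hx hν
  have nonneg : 0 ≤ P.ν x := hν.ge
  rcases eq_or_ne x 1 with rfl | hx1
  · simp only [P.isResidue.map_one, mkQ_one, map_zero, zero_mul]
  have one_sub_ne : 1 - x ≠ 0 := sub_ne_zero.2 hx1.symm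
  rw [tame_ι_mul_ι_mul, val_x, zero_smul, zero_sub, spec_x]
  rcases eq_or_ne (P.ν (1 - x)) 0 with hν1 | hν1
  · rw [P.val_mkQ one_sub_ne, P.spec_mkQ one_sub_ne hν1, hν1, Int.cast_zero, zero_smul, neg_zero,
      map_zero, zero_mul, zero_add, P.res_one_sub (.inr nonneg)]
  · have hpos : 0 < P.ν (1 - x) := by
      have h := P.isDVal.map_add 1 (-x) one_ne_zero (neg_ne_zero.2 hx)
        (by rwa [← sub_eq_add_neg])
      rw [P.isDVal.map_one, P.isDVal.map_neg hx, hν, min_self, ← sub_eq_add_neg] at h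
      exact h.lt_of_ne' hν1
    have res_x : P.res x = 1 := by
      have h := (P.one_sub_of_pos one_sub_ne hpos).2.2
      rwa [sub_sub_cancel] at h
    simp only [res_x, mkQ_one, map_zero, smul_zero, neg_zero, zero_mul, add_zero]

theorem tame_steinberg (z : K →₀ ExteriorAlgebra ℚ (UnitsQ K)) :
    P.tame (steinberg K z) = steinberg κ (P.blochTame z) := by
  induction z using Finsupp.induction_linear with
  | zero => simp only [map_zero]
  | add z z' hz hz' => simp only [map_add, hz, hz']
  | single x e =>
    rw [steinberg_single]
    rcases eq_or_ne x 0 with rfl | hx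
    · rw [P.blochTame_single (.inl rfl), steinberg_single, P.res_zero, mkQ_zero, mkQ_zero, map_zero,
        zero_mul, zero_mul, map_zero, map_zero, zero_mul, zero_mul]
    · rcases eq_or_ne (P.ν x) 0 with hν | hν
      · rw [P.blochTame_single (.inr hν), steinberg_single, P.tame_steinberg_of_unit hx hν]
      · rw [P.blochTame_single_of_ne hx hν, map_zero, P.tame_steinberg_of_ne hx hν]

end Place

/-! ### The degree filtration on symbols over `F(t)` -/

section AffineLine

open Polynomial

variable {F : Type u} [Field F]

/-- The class of a polynomial in `F(t)^× ⊗ ℚ`. -/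
def polyQ (f : F[X]) : UnitsQ (RatFunc F) := mkQ (algebraMap F[X] (RatFunc F) f)

theorem polyQ_zero : polyQ (0 : F[X]) = 0 := by rw [polyQ, map_zero, mkQ_zero]

theorem polyQ_mul {f g : F[X]} (hf : f ≠ 0) (hg : g ≠ 0) :
    polyQ (f * g) = polyQ f + polyQ g := by
  rw [polyQ, map_mul, mkQ_mul (RatFunc.algebraMap_ne_zero hf) (RatFunc.algebraMap_ne_zero hg)]
  rfl

theorem mkQ_algebraMap_div {f g : F[X]} (hf : f ≠ 0) (hg : g ≠ 0) :
    mkQ (algebraMap F[X] (RatFunc F) f / algebraMap F[X] (RatFunc F) g) = polyQ f - polyQ g :=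
  mkQ_div (RatFunc.algebraMap_ne_zero hf) (RatFunc.algebraMap_ne_zero hg)

theorem mkQ_one_sub_algebraMap_div {f g : F[X]} (hg : g ≠ 0) (hfg : g - f ≠ 0) :
    mkQ (1 - algebraMap F[X] (RatFunc F) f / algebraMap F[X] (RatFunc F) g) =
      polyQ (g - f) - polyQ g := by
  rw [one_sub_div (RatFunc.algebraMap_ne_zero hg), ← map_sub, mkQ_algebraMap_div hfg hg]

theorem span_range_polyQ_eq_top : Submodule.span ℚ (Set.range (polyQ (F := F))) = ⊤ := by
  rw [eq_top_iff, ← span_mkQ_eq_top, Submodule.span_le]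
  rintro _ ⟨x, hx, rfl⟩
  rw [← RatFunc.num_div_denom x, mkQ_algebraMap_div (RatFunc.num_ne_zero hx) x.denom_ne_zero]
  exact sub_mem (Submodule.subset_span ⟨_, rfl⟩) (Submodule.subset_span ⟨_, rfl⟩)

variable (F) in
/-- The span in `F(t)^× ⊗ ℚ` of the classes of the polynomials of degree less than `d`. -/
def degLT (d : ℕ) : Submodule ℚ (UnitsQ (RatFunc F)) :=
  Submodule.span ℚ {v | ∃ f : F[X], f.natDegree < d ∧ v = polyQ f}

theorem polyQ_mem_degLT {d : ℕ} {f : F[X]} (hf : f.natDegree < d) : polyQ f ∈ degLT F d :=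
  Submodule.subset_span ⟨f, hf, rfl⟩

theorem degLT_mono {m n : ℕ} (h : m ≤ n) : degLT F m ≤ degLT F n := by
  refine Submodule.span_mono ?_
  rintro _ ⟨f, hf, rfl⟩
  exact ⟨f, hf.trans_le h, rfl⟩

theorem exists_mem_degLT (v : UnitsQ (RatFunc F)) : ∃ n, v ∈ degLT F n := by
  have hv : v ∈ Submodule.span ℚ (Set.range (polyQ (F := F))) :=
    span_range_polyQ_eq_top.ge Submodule.mem_top
  induction hv using Submodule.span_induction with
  | mem v hv =>
    obtain ⟨f, rfl⟩ := hv
    exact ⟨_, polyQ_mem_degLT f.natDegree.lt_succ_self⟩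
  | zero => exact ⟨0, zero_mem _⟩
  | add v w _ _ hv hw =>
    obtain ⟨m, hm⟩ := hv
    obtain ⟨n, hn⟩ := hw
    exact ⟨max m n, add_mem (degLT_mono (le_max_left m n) hm) (degLT_mono (le_max_right m n) hn)⟩
  | smul r v _ hv => exact hv.imp fun n hn => Submodule.smul_mem _ r hn

theorem polyQ_eq_C_leadingCoeff_add {f : F[X]} (hf : f ≠ 0) :
    polyQ f = polyQ (C f.leadingCoeff) + polyQ (f * C f.leadingCoeff⁻¹) := by
  have hlead : f.leadingCoeff ≠ 0 := leadingCoeff_ne_zero.2 hf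
  rw [← polyQ_mul (C_ne_zero.2 hlead) (monic_mul_leadingCoeff_inv hf).ne_zero, mul_left_comm,
    ← C_mul, mul_inv_cancel₀ hlead, C_1, mul_one]

theorem degLT_succ_le {d : ℕ} (hd : 0 < d) :
    degLT F (d + 1) ≤
      degLT F d ⊔ ⨆ q : {q : MonicIrr F // q.1.natDegree = d}, ℚ ∙ polyQ q.1.1 := by
  rw [degLT, Submodule.span_le]
  rintro _ ⟨f, hf, rfl⟩
  rcases (Nat.lt_succ_iff.1 hf).lt_or_eq with hf | hf
  · exact Submodule.mem_sup_left (polyQ_mem_degLT hf)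
  have hf0 : f ≠ 0 := ne_zero_of_natDegree_gt (hd.trans_eq hf.symm)
  have monic := monic_mul_leadingCoeff_inv hf0
  have natDegree_eq : (f * C f.leadingCoeff⁻¹).natDegree = d := by
    rw [natDegree_mul_C (inv_ne_zero (leadingCoeff_ne_zero.2 hf0)), hf]
  rw [polyQ_eq_C_leadingCoeff_add hf0]
  refine add_mem (Submodule.mem_sup_left (polyQ_mem_degLT ((natDegree_C _).trans_lt hd))) ?_
  generalize f * C f.leadingCoeff⁻¹ = g at monic natDegree_eq ⊢
  by_cases irr : Irreducible g
  · exact Submodule.mem_sup_right (Submodule.mem_iSup_of_mem ⟨⟨g, monic, irr⟩, natDegree_eq⟩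
      (Submodule.mem_span_singleton_self _))
  · have hg1 : g ≠ 1 := by
      rintro rfl
      exact hd.ne (natDegree_one.symm.trans natDegree_eq)
    rw [monic.irreducible_iff_natDegree] at irr
    push Not at irr
    obtain ⟨g₁, g₂, hg₁, hg₂, rfl, hdeg₁, hdeg₂⟩ := irr hg1
    rw [hg₁.natDegree_mul hg₂] at natDegree_eq
    rw [polyQ_mul hg₁.ne_zero hg₂.ne_zero]
    exact Submodule.mem_sup_left
      (add_mem (polyQ_mem_degLT (by lia)) (polyQ_mem_degLT (by lia)))

variable (F) in
/-- The subalgebra of `Λ (F(t)^× ⊗ ℚ)` generated by the polynomials of degree less than `d`. -/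
def symbolsLT (d : ℕ) : Subalgebra ℚ (ExteriorAlgebra ℚ (UnitsQ (RatFunc F))) :=
  exteriorSubalgebra (degLT F d)

variable (F) in
/-- The symbols in polynomials of degree at most `d`, at most one of which has degree `d`. -/
def symbolsLE (d : ℕ) : Submodule ℚ (ExteriorAlgebra ℚ (UnitsQ (RatFunc F))) :=
  Subalgebra.toSubmodule (symbolsLT F d) ⊔
    (degLT F (d + 1)).map (ι ℚ) * Subalgebra.toSubmodule (symbolsLT F d)

theorem ι_polyQ_mem_symbolsLT {d : ℕ} {f : F[X]} (hf : f.natDegree < d) :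
    ι ℚ (polyQ f) ∈ symbolsLT F d :=
  ι_mem_exteriorSubalgebra (polyQ_mem_degLT hf)

theorem symbolsLT_mono {m n : ℕ} (h : m ≤ n) : symbolsLT F m ≤ symbolsLT F n :=
  exteriorSubalgebra_mono (degLT_mono h)

theorem symbolsLE_le_symbolsLT {m n : ℕ} (h : m < n) :
    symbolsLE F m ≤ Subalgebra.toSubmodule (symbolsLT F n) := by
  refine sup_le (symbolsLT_mono h.le) (Submodule.mul_le.2 ?_)
  rintro _ ⟨v, hv, rfl⟩ e he
  exact (symbolsLT F n).mul_mem (ι_mem_exteriorSubalgebra (degLT_mono h hv))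
    (symbolsLT_mono h.le he)

theorem symbolsLE_mono {m n : ℕ} (h : m ≤ n) : symbolsLE F m ≤ symbolsLE F n := by
  rcases h.eq_or_lt with rfl | h
  · exact le_rfl
  · exact (symbolsLE_le_symbolsLT h).trans le_sup_left

theorem exists_mem_symbolsLT (e : ExteriorAlgebra ℚ (UnitsQ (RatFunc F))) :
    ∃ n, e ∈ symbolsLT F n := by
  induction e using exteriorAlgebra_induction_left with
  | algebraMap r => exact ⟨0, algebraMap_mem _ r⟩
  | add e e' he he' =>
    obtain ⟨m, hm⟩ := he
    obtain ⟨n, hn⟩ := he'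
    exact ⟨max m n,
      add_mem (symbolsLT_mono (le_max_left m n) hm) (symbolsLT_mono (le_max_right m n) hn)⟩
  | ι_mul v e he =>
    obtain ⟨m, hm⟩ := exists_mem_degLT v
    obtain ⟨n, hn⟩ := he
    exact ⟨max m n, mul_mem (ι_mem_exteriorSubalgebra (degLT_mono (le_max_left m n) hm))
      (symbolsLT_mono (le_max_right m n) hn)⟩

theorem symbolsLT_one_le_range_map : symbolsLT F 1 ≤
    (ExteriorAlgebra.map (unitsQMap (algebraMap F (RatFunc F)))).range := by
  have le_range : degLT F 1 ≤ LinearMap.range (unitsQMap (algebraMap F (RatFunc F))) := by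
    rw [degLT, Submodule.span_le]
    rintro _ ⟨f, hf, rfl⟩
    refine ⟨mkQ (f.coeff 0), ?_⟩
    rw [unitsQMap_mkQ, RatFunc.algebraMap_eq_C, ← RatFunc.algebraMap_C,
      ← eq_C_of_natDegree_le_zero (Nat.lt_one_iff.1 hf).le, polyQ]
  intro e he
  induction e, he using exteriorSubalgebra_induction with
  | algebraMap r => exact algebraMap_mem _ r
  | add e e' _ _ he he' => exact add_mem he he'
  | ι_mul v hv e _ he =>
    obtain ⟨c, rfl⟩ := le_range hv
    exact mul_mem ⟨ι ℚ c, map_apply_ι _ _⟩ he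

theorem mk_eq_mk_iff_of_natDegree_lt (q : MonicIrr F) {f g : F[X]}
    (hf : f.natDegree < q.1.natDegree) (hg : g.natDegree < q.1.natDegree) :
    AdjoinRoot.mk q.1 f = AdjoinRoot.mk q.1 g ↔ f = g := by
  refine ⟨fun h => ?_, fun h => h ▸ rfl⟩
  by_contra hne
  refine q.2.1.not_dvd_of_natDegree_lt (sub_ne_zero.2 hne) ?_ (AdjoinRoot.mk_eq_mk.1 h)
  exact (natDegree_sub_le f g).trans_lt (max_lt hf hg)

theorem exists_natDegree_lt_mk_eq (q : MonicIrr F) (x : ResField q) :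
    ∃ f : F[X], f.natDegree < q.1.natDegree ∧ (AdjoinRoot.mk q.1 f : AdjoinRoot q.1) = x := by
  obtain ⟨g, hg⟩ := AdjoinRoot.mk_surjective (g := q.1) x
  refine ⟨g %ₘ q.1, natDegree_modByMonic_lt _ q.2.1 fun h => q.2.2.not_isUnit (h ▸ isUnit_one), ?_⟩
  rw [← hg, AdjoinRoot.mk_eq_mk, modByMonic_eq_sub_mul_div]
  simp

theorem ne_zero_of_not_dvd {α : Type*} [SemigroupWithZero α] {a b : α} (h : ¬a ∣ b) : b ≠ 0 := by
  rintro rfl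
  exact h (dvd_zero a)

theorem not_dvd_of_ne {q q' : MonicIrr F} (h : q' ≠ q) : ¬q'.1 ∣ q.1 := fun hdvd =>
  h (Subtype.ext (eq_of_monic_of_associated q'.2.1 q.2.1 (q'.2.2.associated_of_dvd q.2.2 hdvd)))

theorem finite_setOf_dvd {f : F[X]} (hf : f ≠ 0) : {q : MonicIrr F | q.1 ∣ f}.Finite := by
  classical
  refine ((UniqueFactorizationMonoid.normalizedFactors f).toFinset.finite_toSet.preimage
    (f := fun q : MonicIrr F => q.1) Subtype.val_injective.injOn).subset fun q hq => ?_
  rw [Set.mem_preimage, Finset.mem_coe, Multiset.mem_toFinset,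
    Polynomial.mem_normalizedFactors_iff hf]
  exact ⟨q.2.2, q.2.1, hq⟩

variable (F) in
/-- The discrete valuations of `F(t)` at the closed points of the affine line, together with their
canonical residue maps. -/
structure AffineLinePlaces where
  ν : MonicIrr F → RatFunc F → ℤ
  isNuP : ∀ q, IsNuP q (ν q)
  res : ∀ q : MonicIrr F, RatFunc F → ResField q
  isResP : ∀ q, IsResP q (ν q) (res q)

namespace AffineLinePlaces

variable (C : AffineLinePlaces F) (q : MonicIrr F)

/-- The place of `F(t)` at `q`, with `q` itself as the uniformizer. -/
def place : Place (RatFunc F) (ResField q) where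
  ν := C.ν q
  isDVal := (C.isNuP q).1
  res := C.res q
  isResidue := (C.isResP q).1
  uniformizer := algebraMap F[X] (RatFunc F) q.1
  uniformizer_ne_zero := RatFunc.algebraMap_ne_zero q.2.1.ne_zero
  ν_uniformizer := (C.isNuP q).2.1

theorem ν_algebraMap_eq_zero {f : F[X]} (hf : ¬q.1 ∣ f) :
    (C.place q).ν (algebraMap F[X] (RatFunc F) f) = 0 :=
  (C.isNuP q).2.2 f (ne_zero_of_not_dvd hf) hf

theorem res_algebraMap (f : F[X]) :
    (C.place q).res (algebraMap F[X] (RatFunc F) f) = (AdjoinRoot.mk q.1 f : AdjoinRoot q.1) :=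
  (C.isResP q).2 f

theorem val_polyQ_self : (C.place q).val (polyQ q.1) = 1 :=
  ((C.place q).val_mkQ (C.place q).uniformizer_ne_zero).trans
    (by rw [(C.place q).ν_uniformizer, Int.cast_one])

theorem val_polyQ_eq_zero {f : F[X]} (hf : ¬q.1 ∣ f) : (C.place q).val (polyQ f) = 0 := by
  rw [polyQ, (C.place q).val_mkQ (RatFunc.algebraMap_ne_zero (ne_zero_of_not_dvd hf)),
    C.ν_algebraMap_eq_zero q hf, Int.cast_zero]

theorem spec_polyQ {f : F[X]} (hf : ¬q.1 ∣ f) :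
    (C.place q).spec (polyQ f) = mkQ (F := ResField q) (AdjoinRoot.mk q.1 f : AdjoinRoot q.1) := by
  rw [polyQ, (C.place q).spec_mkQ (RatFunc.algebraMap_ne_zero (ne_zero_of_not_dvd hf))
    (C.ν_algebraMap_eq_zero q hf), C.res_algebraMap]

variable {q} in
theorem val_eq_zero_of_mem_degLT {n : ℕ} (hn : n ≤ q.1.natDegree) {v : UnitsQ (RatFunc F)}
    (hv : v ∈ degLT F n) : (C.place q).val v = 0 := by
  suffices degLT F n ≤ LinearMap.ker (C.place q).val from this hv
  rw [degLT, Submodule.span_le]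
  rintro _ ⟨f, hf, rfl⟩
  rw [SetLike.mem_coe, LinearMap.mem_ker]
  rcases eq_or_ne f 0 with rfl | hf0
  · rw [polyQ_zero, map_zero]
  · exact C.val_polyQ_eq_zero q (q.2.1.not_dvd_of_natDegree_lt hf0 (hf.trans_le hn))

variable {q} in
theorem tame_eq_zero_of_mem_symbolsLT {n : ℕ} (hn : n ≤ q.1.natDegree)
    {e : ExteriorAlgebra ℚ (UnitsQ (RatFunc F))} (he : e ∈ symbolsLT F n) :
    (C.place q).tame e = 0 :=
  residue_eq_zero _ _ (fun _ => C.val_eq_zero_of_mem_degLT hn) he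

variable {q} in
theorem tame_ι_mul_of_mem_symbolsLT {n : ℕ} (hn : n ≤ q.1.natDegree) (v : UnitsQ (RatFunc F))
    {e : ExteriorAlgebra ℚ (UnitsQ (RatFunc F))} (he : e ∈ symbolsLT F n) :
    (C.place q).tame (ι ℚ v * e) = (C.place q).val v • ExteriorAlgebra.map (C.place q).spec e :=
  (C.place q).tame_ι_mul_of_mem (fun _ => C.val_eq_zero_of_mem_degLT hn) v he

theorem tame_ι_polyQ_self_mul {e : ExteriorAlgebra ℚ (UnitsQ (RatFunc F))}
    (he : e ∈ symbolsLT F q.1.natDegree) :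
    (C.place q).tame (ι ℚ (polyQ q.1) * e) = ExteriorAlgebra.map (C.place q).spec e := by
  rw [C.tame_ι_mul_of_mem_symbolsLT le_rfl _ he, C.val_polyQ_self, one_smul]

variable {q} in
theorem tame_ι_polyQ_mul_of_ne {q' : MonicIrr F} (hne : q' ≠ q)
    (hle : q.1.natDegree ≤ q'.1.natDegree) {e : ExteriorAlgebra ℚ (UnitsQ (RatFunc F))}
    (he : e ∈ symbolsLT F q.1.natDegree) : (C.place q').tame (ι ℚ (polyQ q.1) * e) = 0 := by
  rw [C.tame_ι_mul_of_mem_symbolsLT hle _ he, C.val_polyQ_eq_zero q' (not_dvd_of_ne hne), zero_smul]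

theorem range_spec_degLT_eq_top :
    LinearMap.range ((C.place q).spec ∘ₗ (degLT F q.1.natDegree).subtype) = ⊤ := by
  rw [eq_top_iff, ← span_mkQ_eq_top, Submodule.span_le]
  rintro _ ⟨x, hx, rfl⟩
  obtain ⟨f, hf, rfl⟩ := exists_natDegree_lt_mk_eq q x
  exact ⟨⟨polyQ f, polyQ_mem_degLT hf⟩, C.spec_polyQ q (mt AdjoinRoot.mk_eq_zero.2 hx)⟩

theorem exists_mem_symbolsLT_map_spec_eq (e : ExteriorAlgebra ℚ (UnitsQ (ResField q))) :
    ∃ e' ∈ symbolsLT F q.1.natDegree, ExteriorAlgebra.map (C.place q).spec e' = e := by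
  obtain ⟨e', rfl⟩ :=
    map_surjective_iff.2 (LinearMap.range_eq_top.1 (C.range_spec_degLT_eq_top q)) e
  exact ⟨_, ⟨e', rfl⟩, DFunLike.congr_fun (map_comp_map _ _) e'⟩

theorem finite_setOf_val_ne_zero (v : UnitsQ (RatFunc F)) :
    {q | (C.place q).val v ≠ 0}.Finite := by
  have hv : v ∈ Submodule.span ℚ (Set.range (polyQ (F := F))) :=
    span_range_polyQ_eq_top.ge Submodule.mem_top
  induction hv using Submodule.span_induction with
  | mem v hv =>
    obtain ⟨f, rfl⟩ := hv
    rcases eq_or_ne f 0 with rfl | hf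
    · simp [polyQ_zero]
    · exact (finite_setOf_dvd hf).subset fun q => not_imp_comm.1 (C.val_polyQ_eq_zero q)
  | zero => simp
  | add v w _ _ hv hw =>
    refine (hv.union hw).subset fun q hq => ?_
    contrapose! hq
    simp_all
  | smul r v _ hv =>
    refine hv.subset fun q hq => ?_
    contrapose! hq
    simp_all

theorem finite_setOf_tame_ne_zero (e : ExteriorAlgebra ℚ (UnitsQ (RatFunc F))) :
    {q | (C.place q).tame e ≠ 0}.Finite := by
  induction e using exteriorAlgebra_induction_left with
  | algebraMap r => simp [Place.tame, residue_algebraMap]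
  | add e e' he he' =>
    refine (he.union he').subset fun q hq => ?_
    contrapose! hq
    simp_all
  | ι_mul v e he =>
    refine ((C.finite_setOf_val_ne_zero v).union he).subset fun q hq => ?_
    contrapose! hq
    simp_all [Place.tame_ι_mul]

end AffineLinePlaces

/-! ### Steinberg elements without tame symbols -/

theorem mem_of_finite_of_forall_single_mem {ι R : Type*} [DecidableEq ι] {M : ι → Type*}
    [Semiring R] [∀ i, AddCommMonoid (M i)] [∀ i, Module R (M i)] {N : Submodule R (∀ i, M i)}
    {φ : ∀ i, M i} (hfin : {i | φ i ≠ 0}.Finite) (h : ∀ i, φ i ≠ 0 → Pi.single i (φ i) ∈ N) :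
    φ ∈ N := by
  have sum_eq : ∑ i ∈ hfin.toFinset, Pi.single i (φ i) = φ := by
    ext j
    rw [Finset.sum_apply, Finset.sum_pi_single, ite_eq_left_iff, hfin.mem_toFinset]
    exact fun hj => (not_not.1 hj).symm
  rw [← sum_eq]
  exact sum_mem fun i hi => h i (hfin.mem_toFinset.1 hi)

theorem steinberg_single_mem_symbolsLE (q : MonicIrr F) {f : F[X]}
    (hf : f.natDegree < q.1.natDegree) {e : ExteriorAlgebra ℚ (UnitsQ (RatFunc F))}
    (he : e ∈ symbolsLT F q.1.natDegree) :
    steinberg (RatFunc F) (Finsupp.single (algebraMap F[X] (RatFunc F) f) (ι ℚ (polyQ q.1) * e)) ∈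
      symbolsLE F q.1.natDegree := by
  have natDegree_one_sub : (1 - f).natDegree < q.1.natDegree :=
    (natDegree_sub_le 1 f).trans_lt (max_lt (natDegree_one.trans_lt hf.pos) hf)
  have mkQ_one_sub : mkQ (1 - algebraMap F[X] (RatFunc F) f) = polyQ (1 - f) := by
    rw [polyQ, map_sub, map_one]
  have pair_mem : ι ℚ (polyQ f) * ι ℚ (polyQ (1 - f)) ∈ symbolsLT F q.1.natDegree :=
    mul_mem (ι_polyQ_mem_symbolsLT hf) (ι_polyQ_mem_symbolsLT natDegree_one_sub)
  rw [steinberg_single, mkQ_one_sub, ← mul_assoc]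
  refine Submodule.mem_sup_right ?_
  rw [← (Subalgebra.isIdempotentElem_toSubmodule (symbolsLT F q.1.natDegree)).eq, ← mul_assoc]
  exact Submodule.mul_mem_mul (exteriorSubalgebra_mul_map_ι_le _ _ (Submodule.mul_mem_mul pair_mem
    (Submodule.mem_map_of_mem (polyQ_mem_degLT q.1.natDegree.lt_succ_self)))) he

namespace AffineLinePlaces

variable (C : AffineLinePlaces F)

/-- The families of lifted tame symbols at all closed points of the affine line. -/
def blochTame : (RatFunc F →₀ ExteriorAlgebra ℚ (UnitsQ (RatFunc F))) →ₗ[ℚ]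
    ∀ q : MonicIrr F, ResField q →₀ ExteriorAlgebra ℚ (UnitsQ (ResField q)) :=
  LinearMap.pi fun q => (C.place q).blochTame

theorem blochTame_apply (z : RatFunc F →₀ ExteriorAlgebra ℚ (UnitsQ (RatFunc F)))
    (q : MonicIrr F) : C.blochTame z q = (C.place q).blochTame z := rfl

theorem finite_setOf_blochTame_ne_zero
    (z : RatFunc F →₀ ExteriorAlgebra ℚ (UnitsQ (RatFunc F))) :
    {q | C.blochTame z q ≠ 0}.Finite := by
  induction z using Finsupp.induction_linear with
  | zero => simp
  | add z z' hz hz' =>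
    refine (hz.union hz').subset fun q hq => ?_
    contrapose! hq
    simp_all
  | single x e =>
    exact (C.finite_setOf_tame_ne_zero e).subset fun q =>
      mt ((C.place q).blochTame_single_eq_zero x)

/-- The image under the Steinberg map of the elements all of whose lifted tame symbols vanish. -/
def steinbergKer : Submodule ℚ (ExteriorAlgebra ℚ (UnitsQ (RatFunc F))) :=
  (LinearMap.ker C.blochTame).map (steinberg (RatFunc F))

theorem tame_eq_zero_of_mem_steinbergKer (q : MonicIrr F)
    {e : ExteriorAlgebra ℚ (UnitsQ (RatFunc F))} (he : e ∈ C.steinbergKer) :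
    (C.place q).tame e = 0 := by
  obtain ⟨z, hz, rfl⟩ := he
  rw [(C.place q).tame_steinberg, ← C.blochTame_apply, LinearMap.mem_ker.1 hz, Pi.zero_apply,
    map_zero]

/-- The families of lifted tame symbols of the elements that the Steinberg map sends into `S`. -/
def realizable (S : Submodule ℚ (ExteriorAlgebra ℚ (UnitsQ (RatFunc F)))) :
    Submodule ℚ (∀ q : MonicIrr F, ResField q →₀ ExteriorAlgebra ℚ (UnitsQ (ResField q))) :=
  (S.comap (steinberg (RatFunc F))).map C.blochTame

theorem realizable_mono {S S' : Submodule ℚ (ExteriorAlgebra ℚ (UnitsQ (RatFunc F)))}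
    (h : S ≤ S') : C.realizable S ≤ C.realizable S' :=
  Submodule.map_mono (Submodule.comap_mono h)

theorem steinberg_mem_sup_steinbergKer
    {S : Submodule ℚ (ExteriorAlgebra ℚ (UnitsQ (RatFunc F)))}
    {z : RatFunc F →₀ ExteriorAlgebra ℚ (UnitsQ (RatFunc F))}
    (hz : C.blochTame z ∈ C.realizable S) :
    steinberg (RatFunc F) z ∈ S ⊔ C.steinbergKer := by
  obtain ⟨w, hw, hwz⟩ := hz
  have hker : z - w ∈ LinearMap.ker C.blochTame := by rw [LinearMap.mem_ker, map_sub, hwz, sub_self]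
  rw [← add_sub_cancel w z, map_add]
  exact Submodule.add_mem_sup hw ⟨_, hker, rfl⟩

theorem blochTame_single_ι_polyQ_mul_self (q : MonicIrr F) {f : F[X]}
    (hf : f.natDegree < q.1.natDegree) {e : ExteriorAlgebra ℚ (UnitsQ (RatFunc F))}
    (he : e ∈ symbolsLT F q.1.natDegree) :
    C.blochTame (Finsupp.single (algebraMap F[X] (RatFunc F) f) (ι ℚ (polyQ q.1) * e)) q =
      Finsupp.single (AdjoinRoot.mk q.1 f) (ExteriorAlgebra.map (C.place q).spec e) := by
  have zero_or_unit : algebraMap F[X] (RatFunc F) f = 0 ∨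
      (C.place q).ν (algebraMap F[X] (RatFunc F) f) = 0 := by
    rcases eq_or_ne f 0 with rfl | hf0
    · exact .inl (map_zero _)
    · exact .inr (C.ν_algebraMap_eq_zero q (q.2.1.not_dvd_of_natDegree_lt hf0 hf))
  rw [blochTame_apply, Place.blochTame_single _ zero_or_unit, C.res_algebraMap,
    C.tame_ι_polyQ_self_mul q he]
  rfl

open Classical in
theorem single_mem_realizable (q : MonicIrr F)
    (ρ : ResField q →₀ ExteriorAlgebra ℚ (UnitsQ (ResField q))) :
    Pi.single q ρ ∈ C.realizable (symbolsLE F q.1.natDegree) := by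
  induction hd : q.1.natDegree using Nat.strong_induction_on generalizing q with
  | _ d ih =>
  subst hd
  induction ρ using Finsupp.induction_linear with
  | zero => rw [Pi.single_zero]; exact zero_mem _
  | add ρ ρ' hρ hρ' => rw [Pi.single_add]; exact add_mem hρ hρ'
  | single x e =>
    obtain ⟨f, hf, hfx⟩ := exists_natDegree_lt_mk_eq q x
    obtain ⟨e', he', rfl⟩ := C.exists_mem_symbolsLT_map_spec_eq q e
    set z := Finsupp.single (algebraMap F[X] (RatFunc F) f) (ι ℚ (polyQ q.1) * e')
    have at_self : C.blochTame z q = Finsupp.single x _ :=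
      hfx ▸ C.blochTame_single_ι_polyQ_mul_self q hf he'
    have at_other {q' : MonicIrr F} (hne : q' ≠ q) (hle : q.1.natDegree ≤ q'.1.natDegree) :
        C.blochTame z q' = 0 :=
      (C.place q').blochTame_single_eq_zero _ (C.tame_ι_polyQ_mul_of_ne hne hle he')
    have hz : C.blochTame z ∈ C.realizable (symbolsLE F q.1.natDegree) :=
      ⟨z, steinberg_single_mem_symbolsLE q hf he', rfl⟩
    rw [← at_self, ← sub_sub_cancel (C.blochTame z) (Pi.single q (C.blochTame z q))]
    refine sub_mem hz (mem_of_finite_of_forall_single_mem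
      ((C.finite_setOf_blochTame_ne_zero z).subset fun q' => ?_) fun q' hq' => ?_)
    · rcases eq_or_ne q' q with rfl | hne
      · simp
      · simp [hne]
    · have hne : q' ≠ q := by
        rintro rfl
        simp at hq'
      have hlt : q'.1.natDegree < q.1.natDegree := by
        by_contra! hle
        simp [hne, at_other hne hle] at hq'
      exact C.realizable_mono (symbolsLE_mono hlt.le) (ih _ hlt q' _ rfl)

theorem ι_mul_ι_one_sub_mul_mem {n : ℕ}
    {S : Submodule ℚ (ExteriorAlgebra ℚ (UnitsQ (RatFunc F)))}
    (hS : ∀ m < n, symbolsLE F m ≤ S) (x : RatFunc F)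
    {e : ExteriorAlgebra ℚ (UnitsQ (RatFunc F))} (he : e ∈ symbolsLT F n) :
    ι ℚ (mkQ x) * ι ℚ (mkQ (1 - x)) * e ∈ S ⊔ C.steinbergKer := by
  classical
  rw [← steinberg_single]
  refine C.steinberg_mem_sup_steinbergKer (mem_of_finite_of_forall_single_mem
    (C.finite_setOf_blochTame_ne_zero _) fun q hq => ?_)
  have hlt : q.1.natDegree < n := by
    by_contra! hle
    exact hq ((C.place q).blochTame_single_eq_zero x (C.tame_eq_zero_of_mem_symbolsLT hle he))
  exact C.realizable_mono (hS _ hlt) (C.single_mem_realizable q _)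

end AffineLinePlaces

/-! ### Reduction of the number of top degree factors -/

/-- The span of the Steinberg elements `x ∧ (1 - x)`. -/
def steinbergSpan (K : Type u) [Field K] : Submodule ℚ (ExteriorAlgebra ℚ (UnitsQ K)) :=
  Submodule.span ℚ (Set.range fun x : K => ι ℚ (mkQ x) * ι ℚ (mkQ (1 - x)))

theorem natDegree_sub_lt_of_monic {f g : F[X]} {d : ℕ} (hf : f.Monic) (hg : g.Monic)
    (hfd : f.natDegree = d) (hgd : g.natDegree = d) (hne : f ≠ g) : (f - g).natDegree < d := by
  rw [← hfd]
  refine natDegree_lt_natDegree (sub_ne_zero.2 hne) (degree_sub_lt_left ?_ hf.ne_zero ?_)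
  · rw [degree_eq_natDegree hf.ne_zero, degree_eq_natDegree hg.ne_zero, hfd, hgd]
  · rw [hf.leadingCoeff, hg.leadingCoeff]

theorem ι_polyQ_mul_ι_polyQ_mem {f g : F[X]} {d : ℕ} (hf : f.Monic) (hg : g.Monic)
    (hfd : f.natDegree = d) (hgd : g.natDegree = d) :
    ι ℚ (polyQ f) * ι ℚ (polyQ g) ∈
      (degLT F d).map (ι ℚ) * (degLT F (d + 1)).map (ι ℚ) ⊔ steinbergSpan (RatFunc F) := by
  rcases eq_or_ne f g with rfl | hne
  · rw [ι_sq_zero]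
    exact zero_mem _
  have natDegree_sub := natDegree_sub_lt_of_monic hg hf hgd hfd hne.symm
  have mul_mem {f' : F[X]} (h : f'.natDegree = d) : ι ℚ (polyQ f') * ι ℚ (polyQ (g - f)) ∈
      (degLT F d).map (ι ℚ) * (degLT F (d + 1)).map (ι ℚ) := by
    rw [map_ι_mul_map_ι_comm]
    exact Submodule.mul_mem_mul
      (Submodule.mem_map_of_mem (polyQ_mem_degLT (h.trans_lt d.lt_succ_self)))
      (Submodule.mem_map_of_mem (polyQ_mem_degLT natDegree_sub))
  -- The Steinberg element of `x = f / g`, for which `1 - x = (g - f) / g`.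
  have steinberg_mem : ι ℚ (polyQ f - polyQ g) * ι ℚ (polyQ (g - f) - polyQ g) ∈
      steinbergSpan (RatFunc F) := by
    rw [← mkQ_algebraMap_div hf.ne_zero hg.ne_zero,
      ← mkQ_one_sub_algebraMap_div hg.ne_zero (sub_ne_zero.2 hne.symm)]
    exact Submodule.subset_span ⟨_, rfl⟩
  have expand : ι ℚ (polyQ f) * ι ℚ (polyQ g) =
      ι ℚ (polyQ f) * ι ℚ (polyQ (g - f)) - ι ℚ (polyQ g) * ι ℚ (polyQ (g - f)) -
        ι ℚ (polyQ f - polyQ g) * ι ℚ (polyQ (g - f) - polyQ g) := by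
    simp only [map_sub, sub_mul, mul_sub, ι_sq_zero]
    abel
  rw [expand]
  exact sub_mem (Submodule.mem_sup_left (sub_mem (mul_mem hfd) (mul_mem hgd)))
    (Submodule.mem_sup_right steinberg_mem)

theorem map_ι_degLT_succ_le {d : ℕ} (hd : 0 < d) : (degLT F (d + 1)).map (ι ℚ) ≤
    (degLT F d).map (ι ℚ) ⊔
      ⨆ q : {q : MonicIrr F // q.1.natDegree = d}, ℚ ∙ ι ℚ (polyQ q.1.1) := by
  refine (Submodule.map_mono (degLT_succ_le hd)).trans_eq ?_
  simp only [Submodule.map_sup, Submodule.map_iSup, Submodule.map_span, Set.image_singleton]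

theorem symbolsLE_le {d : ℕ} (hd : 0 < d) : symbolsLE F d ≤
    Subalgebra.toSubmodule (symbolsLT F d) ⊔ ⨆ q : {q : MonicIrr F // q.1.natDegree = d},
      (ℚ ∙ ι ℚ (polyQ q.1.1)) * Subalgebra.toSubmodule (symbolsLT F d) := by
  refine sup_le le_sup_left ((mul_le_mul_left (map_ι_degLT_succ_le hd) _).trans ?_)
  rw [Submodule.sup_mul, Submodule.iSup_mul]
  exact sup_le_sup_right (map_ι_mul_exteriorSubalgebra_le _) _

theorem map_ι_degLT_succ_mul_self_le {d : ℕ} (hd : 0 < d) :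
    (degLT F (d + 1)).map (ι ℚ) * (degLT F (d + 1)).map (ι ℚ) ≤
      (degLT F d).map (ι ℚ) * (degLT F (d + 1)).map (ι ℚ) ⊔ steinbergSpan (RatFunc F) := by
  refine (mul_le_mul_left (map_ι_degLT_succ_le hd) _).trans ?_
  rw [Submodule.sup_mul, Submodule.iSup_mul]
  refine sup_le le_sup_left (iSup_le fun f => ?_)
  refine (mul_le_mul_right (map_ι_degLT_succ_le hd) _).trans ?_
  rw [Submodule.mul_sup, Submodule.mul_iSup]
  refine sup_le ?_ (iSup_le fun g => ?_)
  · rw [map_ι_mul_map_ι_comm]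
    refine le_sup_of_le_left (mul_le_mul_left ?_ _)
    rw [Submodule.span_singleton_le_iff_mem]
    exact Submodule.mem_map_of_mem (polyQ_mem_degLT (f.2.trans_lt d.lt_succ_self))
  · rw [Submodule.span_mul_span, Set.singleton_mul_singleton, Submodule.span_singleton_le_iff_mem]
    exact ι_polyQ_mul_ι_polyQ_mem f.1.2.1 g.1.2.1 f.2 g.2

namespace AffineLinePlaces

variable (C : AffineLinePlaces F)

theorem steinbergSpan_mul_symbolsLT_succ_le (d : ℕ) :
    steinbergSpan (RatFunc F) * Subalgebra.toSubmodule (symbolsLT F (d + 1)) ≤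
      symbolsLE F d ⊔ C.steinbergKer := by
  rw [steinbergSpan, ← Submodule.span_eq (Subalgebra.toSubmodule _), Submodule.span_mul_span,
    Submodule.span_le]
  rintro _ ⟨_, ⟨x, rfl⟩, e, he, rfl⟩
  exact C.ι_mul_ι_one_sub_mul_mem (fun m hm => symbolsLE_mono (Nat.lt_succ_iff.1 hm)) x he

theorem map_ι_degLT_succ_pow_mul_le {d : ℕ} (hd : 0 < d) (n : ℕ) :
    (degLT F (d + 1)).map (ι ℚ) ^ n * Subalgebra.toSubmodule (symbolsLT F d) ≤
      symbolsLE F d ⊔ C.steinbergKer := by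
  set A := (degLT F d).map (ι ℚ)
  set B := (degLT F (d + 1)).map (ι ℚ)
  set L := Subalgebra.toSubmodule (symbolsLT F d)
  have le_succ (n : ℕ) : B ^ n * L ≤ Subalgebra.toSubmodule (symbolsLT F (d + 1)) := by
    induction n with
    | zero => rw [pow_zero, one_mul]; exact symbolsLT_mono d.le_succ
    | succ n ih =>
      rw [pow_succ', mul_assoc]
      exact (mul_le_mul_right ih _).trans (map_ι_mul_exteriorSubalgebra_le _)
  induction n using Nat.twoStepInduction with
  | zero => rw [pow_zero, one_mul]; exact le_sup_of_le_left le_sup_left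
  | one => rw [pow_one]; exact le_sup_of_le_left le_sup_right
  | more n _ ih =>
    have comm : A * B ^ (n + 1) = B ^ (n + 1) * A :=
      Commute.pow_right (map_ι_mul_map_ι_comm _ _) (n + 1)
    calc B ^ (n + 2) * L
        = B * B * (B ^ n * L) := by rw [← mul_assoc, ← pow_two, ← pow_add, add_comm]
      _ ≤ (A * B ⊔ steinbergSpan (RatFunc F)) * (B ^ n * L) :=
        mul_le_mul_left (map_ι_degLT_succ_mul_self_le hd) _
      _ = B ^ (n + 1) * (A * L) ⊔ steinbergSpan (RatFunc F) * (B ^ n * L) := by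
        rw [Submodule.sup_mul, ← mul_assoc (B ^ (n + 1)), ← comm, pow_succ', ← mul_assoc A,
          mul_assoc (A * B)]
      _ ≤ symbolsLE F d ⊔ C.steinbergKer := sup_le
        ((mul_le_mul_right (map_ι_mul_exteriorSubalgebra_le _) _).trans ih)
        ((mul_le_mul_right (le_succ n) _).trans (C.steinbergSpan_mul_symbolsLT_succ_le d))

theorem symbolsLT_succ_le {d : ℕ} (hd : 0 < d) :
    Subalgebra.toSubmodule (symbolsLT F (d + 1)) ≤ symbolsLE F d ⊔ C.steinbergKer := by
  refine (exteriorSubalgebra_le_iSup_pow _).trans (iSup_le fun n => ?_)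
  refine le_trans ?_ (C.map_ι_degLT_succ_pow_mul_le hd n)
  exact le_mul_of_one_le_right' (Submodule.one_le.2 (one_mem (symbolsLT F d)))

end AffineLinePlaces

/-! ### Descent along the degree filtration -/

theorem natDegree_lt_of_mul_sub_eq_mul {p f g h c : F[X]} (hf : f.natDegree < p.natDegree)
    (hg : g.natDegree < p.natDegree) (hh : h.natDegree < p.natDegree)
    (hc : f * g - h = p * c) (hc0 : c ≠ 0) : c.natDegree < p.natDegree := by
  have natDegree_le := (natDegree_sub_le (f * g) h).trans (max_le_max natDegree_mul_le le_rfl)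
  rw [hc, natDegree_mul (ne_zero_of_natDegree_gt hf) hc0] at natDegree_le
  lia

namespace AffineLinePlaces

variable (C : AffineLinePlaces F) (q : MonicIrr F)

/-- The classes `v` such that `q ∧ v ∧ l` reduces to symbols of degree less than `deg q`, for all
symbols `l` of degree less than `deg q`. -/
def reducing : Submodule ℚ (UnitsQ (RatFunc F)) where
  carrier := {v | ∀ l ∈ symbolsLT F q.1.natDegree, ι ℚ (polyQ q.1) * (ι ℚ v * l) ∈
    Subalgebra.toSubmodule (symbolsLT F q.1.natDegree) ⊔ C.steinbergKer}
  add_mem' hv hw l hl := by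
    rw [map_add, add_mul, mul_add]
    exact add_mem (hv l hl) (hw l hl)
  zero_mem' l _ := by
    rw [map_zero, zero_mul, mul_zero]
    exact zero_mem _
  smul_mem' r v hv l hl := by
    rw [map_smul, smul_mul_assoc, mul_smul_comm]
    exact Submodule.smul_mem _ r (hv l hl)

theorem polyQ_add_polyQ_sub_polyQ_mem_reducing {f g h : F[X]} (hf0 : f ≠ 0) (hg0 : g ≠ 0)
    (hh0 : h ≠ 0) (hf : f.natDegree < q.1.natDegree) (hg : g.natDegree < q.1.natDegree)
    (hh : h.natDegree < q.1.natDegree) (hdvd : q.1 ∣ f * g - h) :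
    polyQ f + polyQ g - polyQ h ∈ C.reducing q := by
  obtain ⟨c, hc⟩ := hdvd
  rcases eq_or_ne c 0 with rfl | hc0
  · rw [mul_zero, sub_eq_zero] at hc
    rw [← hc, polyQ_mul hf0 hg0, sub_self]
    exact zero_mem _
  have hfg : polyQ f + polyQ g ∈ degLT F q.1.natDegree :=
    add_mem (polyQ_mem_degLT hf) (polyQ_mem_degLT hg)
  intro l hl
  have hqc : f * g - h ≠ 0 := hc ▸ mul_ne_zero q.2.1.ne_zero hc0
  -- The Steinberg element of `x = h / (f g)`, for which `1 - x = q c / (f g)`.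
  have steinberg_mem := C.ι_mul_ι_one_sub_mul_mem (fun m hm => symbolsLE_le_symbolsLT hm)
    (algebraMap F[X] (RatFunc F) h / algebraMap F[X] (RatFunc F) (f * g)) hl
  rw [mkQ_algebraMap_div hh0 (mul_ne_zero hf0 hg0),
    mkQ_one_sub_algebraMap_div (mul_ne_zero hf0 hg0) hqc, hc, polyQ_mul hf0 hg0,
    polyQ_mul q.2.1.ne_zero hc0] at steinberg_mem
  have lower_mem : ι ℚ (polyQ h - (polyQ f + polyQ g)) * ι ℚ (polyQ c - (polyQ f + polyQ g)) * l ∈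
      symbolsLT F q.1.natDegree :=
    mul_mem (mul_mem (ι_mem_exteriorSubalgebra (sub_mem (polyQ_mem_degLT hh) hfg))
      (ι_mem_exteriorSubalgebra
        (sub_mem (polyQ_mem_degLT (natDegree_lt_of_mul_sub_eq_mul hf hg hh hc hc0)) hfg))) hl
  convert sub_mem steinberg_mem (Submodule.mem_sup_left lower_mem) using 1
  rw [← sub_mul, ← mul_sub, ← map_sub, ← mul_assoc, sub_sub_sub_cancel_right, add_sub_cancel_right,
    eq_neg_of_add_eq_zero_left (ι_add_mul_swap _ (polyQ q.1)), ← mul_neg, ← map_neg, neg_sub]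

theorem mem_reducing_of_spec_eq_zero {v : UnitsQ (RatFunc F)} (hv : v ∈ degLT F q.1.natDegree)
    (hspec : (C.place q).spec v = 0) : v ∈ C.reducing q := by
  choose lift natDegree_lift mk_lift using exists_natDegree_lt_mk_eq q
  have lift_ne_zero {x : ResField q} (hx : x ≠ 0) : lift x ≠ 0 := fun h =>
    hx ((mk_lift x).symm.trans (by rw [h]; exact map_zero _))
  have lift_mul (x y : ResField q) (hx : x ≠ 0) (hy : y ≠ 0) :
      (C.reducing q).mkQ (polyQ (lift (x * y))) =
        (C.reducing q).mkQ (polyQ (lift x)) + (C.reducing q).mkQ (polyQ (lift y)) := by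
    rw [← map_add, eq_comm, ← sub_eq_zero, ← map_sub, Submodule.mkQ_apply,
      Submodule.Quotient.mk_eq_zero]
    refine C.polyQ_add_polyQ_sub_polyQ_mem_reducing q (lift_ne_zero hx) (lift_ne_zero hy)
      (lift_ne_zero (mul_ne_zero hx hy)) (natDegree_lift x) (natDegree_lift y)
      (natDegree_lift (x * y)) (AdjoinRoot.mk_eq_mk.1 ?_)
    rw [map_mul, mk_lift, mk_lift, mk_lift]
    rfl
  have section_spec : Set.EqOn
      (liftQ (fun x => (C.reducing q).mkQ (polyQ (lift x))) lift_mul ∘ₗ (C.place q).spec)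
      (C.reducing q).mkQ (degLT F q.1.natDegree) := by
    refine LinearMap.eqOn_span' ?_
    rintro _ ⟨f, hf, rfl⟩
    rcases eq_or_ne f 0 with rfl | hf0
    · rw [polyQ_zero, map_zero, map_zero]
    have hdvd := q.2.1.not_dvd_of_natDegree_lt hf0 hf
    have mk_ne_zero : (AdjoinRoot.mk q.1 f : ResField q) ≠ 0 := mt AdjoinRoot.mk_eq_zero.1 hdvd
    have lift_mk : lift (AdjoinRoot.mk q.1 f) = f :=
      (mk_eq_mk_iff_of_natDegree_lt q (natDegree_lift _) hf).1 (mk_lift _)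
    rw [LinearMap.comp_apply, C.spec_polyQ q hdvd]
    refine (liftQ_mkQ lift_mul mk_ne_zero).trans ?_
    rw [lift_mk]
  have mkQ_eq := section_spec hv
  rw [LinearMap.comp_apply, hspec, map_zero, eq_comm] at mkQ_eq
  exact (Submodule.Quotient.mk_eq_zero _).1 mkQ_eq

theorem exists_section_spec : ∃ σ : UnitsQ (ResField q) →ₗ[ℚ] UnitsQ (RatFunc F),
    (∀ y, σ y ∈ degLT F q.1.natDegree) ∧ ∀ y, (C.place q).spec (σ y) = y := by
  obtain ⟨σ, hσ⟩ := ((C.place q).spec ∘ₗ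
    (degLT F q.1.natDegree).subtype).exists_rightInverse_of_surjective (C.range_spec_degLT_eq_top q)
  exact ⟨(degLT F q.1.natDegree).subtype ∘ₗ σ, fun y => (σ y).2, LinearMap.congr_fun hσ⟩

theorem ι_polyQ_mul_mem_of_map_spec_eq_zero {e : ExteriorAlgebra ℚ (UnitsQ (RatFunc F))}
    (he : e ∈ symbolsLT F q.1.natDegree) (hspec : ExteriorAlgebra.map (C.place q).spec e = 0) :
    ι ℚ (polyQ q.1) * e ∈
      Subalgebra.toSubmodule (symbolsLT F q.1.natDegree) ⊔ C.steinbergKer := by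
  obtain ⟨σ, hσ, hspecσ⟩ := C.exists_section_spec q
  have hker := mem_map_ι_ker_mul_of_map_eq_zero hσ hspecσ he hspec
  clear he hspec
  induction hker using Submodule.mul_induction_on' with
  | mem_mul_mem v hv l hl =>
    obtain ⟨v, ⟨hv, hspecv⟩, rfl⟩ := hv
    exact C.mem_reducing_of_spec_eq_zero q hv hspecv l hl
  | add e _ e' _ he he' =>
    rw [mul_add]
    exact add_mem he he'

variable {C} in
theorem mem_symbolsLT_sup_of_mem_symbolsLE {d : ℕ} (hd : 0 < d)
    {e : ExteriorAlgebra ℚ (UnitsQ (RatFunc F))} (he : e ∈ symbolsLE F d)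
    (htame : ∀ q, (C.place q).tame e = 0) :
    e ∈ Subalgebra.toSubmodule (symbolsLT F d) ⊔ C.steinbergKer := by
  obtain ⟨e₀, he₀, e', he', rfl⟩ := Submodule.mem_sup.1 (symbolsLE_le hd he)
  obtain ⟨s, hs, rfl⟩ := (Submodule.mem_iSup_iff_exists_finsupp _ _).1 he'
  refine add_mem (Submodule.mem_sup_left he₀) (sum_mem fun q hq => ?_)
  choose l hl hls using fun q => Submodule.mem_span_singleton_mul.1 (hs q)
  have tame_s_of_ne (q' : {q : MonicIrr F // q.1.natDegree = d}) (hne : q' ≠ q) :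
      (C.place q.1).tame (s q') = 0 := by
    rw [← hls]
    exact C.tame_ι_polyQ_mul_of_ne (Subtype.coe_ne_coe.2 hne.symm) (q'.2.trans q.2.symm).le
      (q'.2.symm ▸ hl q')
  have tame_s : (C.place q.1).tame (s q) = 0 := by
    have h := htame q.1
    rwa [map_add, C.tame_eq_zero_of_mem_symbolsLT q.2.ge he₀, zero_add, Finsupp.sum, map_sum,
      Finset.sum_eq_single q (fun q' _ => tame_s_of_ne q') (fun h => (h hq).elim)] at h
  have hlq : l q ∈ symbolsLT F q.1.1.natDegree := q.2.symm ▸ hl q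
  rw [← hls, C.tame_ι_polyQ_self_mul q.1 hlq] at tame_s
  have mem := C.ι_polyQ_mul_mem_of_map_spec_eq_zero q.1 hlq tame_s
  rwa [hls, q.2] at mem

theorem mem_range_map_sup_of_tame_eq_zero {e : ExteriorAlgebra ℚ (UnitsQ (RatFunc F))}
    (htame : ∀ q, (C.place q).tame e = 0) :
    e ∈ Subalgebra.toSubmodule
      (ExteriorAlgebra.map (unitsQMap (algebraMap F (RatFunc F)))).range ⊔ C.steinbergKer := by
  obtain ⟨n, hn⟩ := exists_mem_symbolsLT e
  replace hn := symbolsLT_mono n.le_succ hn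
  induction n generalizing e with
  | zero => exact Submodule.mem_sup_left (symbolsLT_one_le_range_map hn)
  | succ n ih =>
    obtain ⟨m, hm, t, ht, rfl⟩ := Submodule.mem_sup.1 (C.symbolsLT_succ_le n.succ_pos hn)
    have tame_m (q : MonicIrr F) : (C.place q).tame m = 0 := by
      rw [← htame q, map_add, C.tame_eq_zero_of_mem_steinbergKer q ht, add_zero]
    obtain ⟨l, hl, t', ht', rfl⟩ :=
      Submodule.mem_sup.1 (mem_symbolsLT_sup_of_mem_symbolsLE n.succ_pos hm tame_m)
    have tame_l (q : MonicIrr F) : (C.place q).tame l = 0 := by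
      rw [← tame_m q, map_add, C.tame_eq_zero_of_mem_steinbergKer q ht', add_zero]
    rw [add_assoc]
    exact add_mem (ih tame_l hl) (Submodule.mem_sup_right (add_mem ht' ht))

end AffineLinePlaces

end AffineLine

/-! ### Comparison with the pre-Bloch group -/

section PreBloch

variable {K : Type u} [Field K]

theorem gen_zero : B2.gen (0 : K) = 0 := by
  rw [B2.gen, Submodule.Quotient.mk_eq_zero]
  exact Submodule.subset_span (.inl (.inl rfl))

theorem gen_one : B2.gen (1 : K) = 0 := by
  rw [B2.gen, Submodule.Quotient.mk_eq_zero]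
  exact Submodule.subset_span (.inl (.inr (.inl rfl)))

theorem exteriorPower_hom_ext_wedgeF {V : Type*} [AddCommGroup V] [Module ℚ V] {n : ℕ}
    {f g : ⋀[ℚ]^n (UnitsQ K) →ₗ[ℚ] V}
    (h : ∀ x : Fin n → K, (∀ i, x i ≠ 0) → f (wedgeF n x) = g (wedgeF n x)) : f = g := by
  refine LinearMap.ext_on (_root_.exteriorPower.ιMulti_span_of_span ℚ n _ span_mkQ_eq_top) ?_
  rintro _ ⟨v, hv, rfl⟩
  choose x hx hvx using fun i => hv ⟨i, rfl⟩
  obtain rfl : v = fun i => mkQ (x i) := funext hvx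
  exact h x hx

variable {V : Type*} [AddCommGroup V] [Module ℚ V]

/-- The map `{x} ⊗ e ↦ {x}₂ ⊗ g e` from the source of the Steinberg map to `B₂(K) ⊗ V`. -/
def toBloch (g : ExteriorAlgebra ℚ (UnitsQ K) →ₗ[ℚ] V) :
    (K →₀ ExteriorAlgebra ℚ (UnitsQ K)) →ₗ[ℚ] B2 K ⊗[ℚ] V :=
  Finsupp.lsum ℚ fun x => TensorProduct.mk ℚ (B2 K) V (B2.gen x) ∘ₗ g

theorem toBloch_single (g : ExteriorAlgebra ℚ (UnitsQ K) →ₗ[ℚ] V) (x : K)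
    (e : ExteriorAlgebra ℚ (UnitsQ K)) :
    toBloch g (Finsupp.single x e) = B2.gen x ⊗ₜ g e := by
  rw [toBloch, Finsupp.lsum_single, LinearMap.comp_apply, TensorProduct.mk_apply]

variable {d : B2 K ⊗[ℚ] (⋀[ℚ]^2 (UnitsQ K)) →ₗ[ℚ] ⋀[ℚ]^4 (UnitsQ K)}

theorem isDelta4_gen_tmul (hd : IsDelta4 K d) (x : K) (b : ⋀[ℚ]^2 (UnitsQ K)) :
    (d (B2.gen x ⊗ₜ b) : ExteriorAlgebra ℚ (UnitsQ K)) =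
      ι ℚ (mkQ x) * ι ℚ (mkQ (1 - x)) * b := by
  rcases eq_or_ne x 0 with rfl | hx0
  · rw [gen_zero, TensorProduct.zero_tmul, map_zero, mkQ_zero, map_zero, zero_mul, zero_mul,
      ZeroMemClass.coe_zero]
  rcases eq_or_ne x 1 with rfl | hx1
  · rw [gen_one, TensorProduct.zero_tmul, map_zero, mkQ_one, map_zero, zero_mul, zero_mul,
      ZeroMemClass.coe_zero]
  suffices heq : (⋀[ℚ]^4 (UnitsQ K)).subtype ∘ₗ d ∘ₗ TensorProduct.mk ℚ _ _ (B2.gen x) =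
      LinearMap.mulLeft ℚ (ι ℚ (mkQ x) * ι ℚ (mkQ (1 - x))) ∘ₗ (⋀[ℚ]^2 (UnitsQ K)).subtype from
    LinearMap.congr_fun heq b
  refine exteriorPower_hom_ext_wedgeF fun y hy => ?_
  obtain ⟨y₀, y₁, rfl⟩ : ∃ y₀ y₁, y = ![y₀, y₁] :=
    ⟨y 0, y 1, funext fun i => by fin_cases i <;> rfl⟩
  refine (congrArg Subtype.val (hd x _ _ hx0 hx1 (hy 0) (hy 1))).trans ?_
  simp [wedgeF, ιMulti_apply, Matrix.vecTail]

theorem isDelta4_toBloch (hd : IsDelta4 K d) (z : K →₀ ExteriorAlgebra ℚ (UnitsQ K)) :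
    d (toBloch (degPart 2) z) = degPart 4 (steinberg K z) := by
  induction z using Finsupp.induction_linear with
  | zero => simp only [map_zero]
  | add z z' hz hz' => simp only [map_add, hz, hz']
  | single x e =>
    refine Subtype.ext ?_
    rw [toBloch_single, steinberg_single, isDelta4_gen_tmul hd, mul_assoc, mul_assoc,
      degPart_succ_ι_mul, degPart_succ_ι_mul]

end PreBloch

namespace Place

variable {K κ : Type u} [Field K] [Field κ] (P : Place K κ)
  {D2 : ⋀[ℚ]^2 (UnitsQ K) →ₗ[ℚ] UnitsQ κ}

theorem ιInv_degPart_one_tame (hD2 : IsTame2U P.ν P.res D2) (e : ExteriorAlgebra ℚ (UnitsQ K)) :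
    ιInv (degPart 1 (P.tame e) : ExteriorAlgebra ℚ (UnitsQ κ)) = D2 (degPart 2 e) := by
  rw [tame, coe_degPart_residue, ← tame, ← P.ι_eq_tame_of_isTame2U hD2, ι_leftInverse]

theorem isTameB2_toBloch (hD2 : IsTame2U P.ν P.res D2)
    {D : B2 K ⊗[ℚ] (⋀[ℚ]^2 (UnitsQ K)) →ₗ[ℚ] B2 κ ⊗[ℚ] UnitsQ κ}
    (hD : IsTameB2 P.ν P.res D2 D) (z : K →₀ ExteriorAlgebra ℚ (UnitsQ K)) :
    D (toBloch (degPart 2) z) =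
      -toBloch (ιInv ∘ₗ (⋀[ℚ]^1 (UnitsQ κ)).subtype ∘ₗ degPart 1) (P.blochTame z) := by
  induction z using Finsupp.induction_linear with
  | zero => simp only [map_zero, neg_zero]
  | add z z' hz hz' => simp only [map_add, hz, hz', neg_add]
  | single x e =>
    rw [toBloch_single]
    rcases eq_or_ne x 0 with rfl | hx0
    · rw [P.blochTame_single (.inl rfl), toBloch_single, P.res_zero, gen_zero, gen_zero,
        TensorProduct.zero_tmul, TensorProduct.zero_tmul, map_zero, neg_zero]
    rcases eq_or_ne (P.ν x) 0 with hν | hν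
    · rw [P.blochTame_single (.inr hν), toBloch_single, hD.2 x _ hx0 hν,
        ← P.ιInv_degPart_one_tame hD2]
      rfl
    · have hx1 : x ≠ 1 := by
        rintro rfl
        exact hν P.isDVal.map_one
      rw [P.blochTame_single_of_ne hx0 hν, hD.1 x _ hx0 hx1 hν, map_zero, neg_zero]

end Place

theorem degPart_mem_range_powMap {M N : Type u} [AddCommGroup M] [Module ℚ M] [AddCommGroup N]
    [Module ℚ N] {f : M →ₗ[ℚ] N} {e : ExteriorAlgebra ℚ N} (he : e ∈ (ExteriorAlgebra.map f).range)
    (n : ℕ) : degPart n e ∈ LinearMap.range (powMap n f) := by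
  obtain ⟨e, rfl⟩ := he
  exact ⟨degPart n e, Subtype.ext (coe_degPart_map f n e).symm⟩

end

end TameSymbol

open TameSymbol in
theorem statement_8_general {F : Type u} [Field F]
    (ν : MonicIrr F → RatFunc F → ℤ) (hν : ∀ q, IsNuP q (ν q))
    (res : ∀ q : MonicIrr F, RatFunc F → ResField q) (hres : ∀ q, IsResP q (ν q) (res q))
    (D4 : ∀ q : MonicIrr F,
      ⋀[ℚ]^4 (UnitsQ (RatFunc F)) →ₗ[ℚ] ⋀[ℚ]^3 (UnitsQ (ResField q)))
    (hD4 : ∀ q, IsTame (ν q) (res q) 3 (D4 q))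
    (D2 : ∀ q : MonicIrr F, ⋀[ℚ]^2 (UnitsQ (RatFunc F)) →ₗ[ℚ] UnitsQ (ResField q))
    (hD2 : ∀ q, IsTame2U (ν q) (res q) (D2 q))
    (DB : ∀ q : MonicIrr F,
      B2 (RatFunc F) ⊗[ℚ] (⋀[ℚ]^2 (UnitsQ (RatFunc F))) →ₗ[ℚ]
        B2 (ResField q) ⊗[ℚ] UnitsQ (ResField q))
    (hDB : ∀ q, IsTameB2 (ν q) (res q) (D2 q) (DB q))
    (d4 : B2 (RatFunc F) ⊗[ℚ] (⋀[ℚ]^2 (UnitsQ (RatFunc F))) →ₗ[ℚ]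
      ⋀[ℚ]^4 (UnitsQ (RatFunc F)))
    (hd4 : IsDelta4 (RatFunc F) d4) {b : ⋀[ℚ]^4 (UnitsQ (RatFunc F))} (hb : ∀ q, D4 q b = 0) :
    ∃ (a₁ : ⋀[ℚ]^4 (UnitsQ (RatFunc F)))
      (a₂ : B2 (RatFunc F) ⊗[ℚ] (⋀[ℚ]^2 (UnitsQ (RatFunc F)))),
      a₁ ∈ LinearMap.range (powMap 4 (unitsQMap (algebraMap F (RatFunc F)))) ∧
      b = a₁ + d4 a₂ ∧ ∀ q, DB q a₂ = 0 := by
  let C : AffineLinePlaces F := ⟨ν, hν, res, hres⟩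
  have tame_b (q : MonicIrr F) : (C.place q).tame b = 0 := by
    rw [← (C.place q).coe_eq_tame_of_isTame (hD4 q), hb, ZeroMemClass.coe_zero]
  obtain ⟨c, hc, _, ⟨z, hz, rfl⟩, hsum⟩ :=
    Submodule.mem_sup.1 (C.mem_range_map_sup_of_tame_eq_zero tame_b)
  refine ⟨degPart 4 c, toBloch (degPart 2) z, degPart_mem_range_powMap hc 4, ?_, fun q => ?_⟩
  · rw [isDelta4_toBloch hd4, ← map_add, hsum, degPart_coe]
  · rw [(C.place q).isTameB2_toBloch (hD2 q) (hDB q), ← C.blochTame_apply, LinearMap.mem_ker.1 hz,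
      Pi.zero_apply, map_zero, neg_zero]

/-- two lifts of the same element differ by an element coming from `Λ⁴ F^×`
plus `δ₄` of an element whose tame symbols all lie in the span of the `{x}₂ ⊗ x`. -/
theorem statement_8 (k F : Type u) [Field k] [IsAlgClosed k] [CharZero k] [Field F]
    [Algebra k F] (hF : IsFields1 k F) (p : MonicIrr F)
    (ν : ∀ q : MonicIrr F, RatFunc F → ℤ) (hν : ∀ q, IsNuP q (ν q))
    (res : ∀ q : MonicIrr F, RatFunc F → ResField q) (hres : ∀ q, IsResP q (ν q) (res q))
    (D4 : ∀ q : MonicIrr F,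
      ⋀[ℚ]^4 (UnitsQ (RatFunc F)) →ₗ[ℚ] ⋀[ℚ]^3 (UnitsQ (ResField q)))
    (hD4 : ∀ q, IsTame (ν q) (res q) 3 (D4 q))
    (D2 : ∀ q : MonicIrr F, ⋀[ℚ]^2 (UnitsQ (RatFunc F)) →ₗ[ℚ] UnitsQ (ResField q))
    (hD2 : ∀ q, IsTame2U (ν q) (res q) (D2 q))
    (DB : ∀ q : MonicIrr F,
      B2 (RatFunc F) ⊗[ℚ] (⋀[ℚ]^2 (UnitsQ (RatFunc F))) →ₗ[ℚ]
        B2 (ResField q) ⊗[ℚ] UnitsQ (ResField q))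
    (hDB : ∀ q, IsTameB2 (ν q) (res q) (D2 q) (DB q))
    (d4 : B2 (RatFunc F) ⊗[ℚ] (⋀[ℚ]^2 (UnitsQ (RatFunc F))) →ₗ[ℚ]
      ⋀[ℚ]^4 (UnitsQ (RatFunc F)))
    (hd4 : IsDelta4 (RatFunc F) d4)
    (a : ⋀[ℚ]^3 (UnitsQ (ResField p))) (b₁ b₂ : ⋀[ℚ]^4 (UnitsQ (RatFunc F)))
    (hb₁ : D4 p b₁ = a ∧ ∀ q : MonicIrr F, q ≠ p → D4 q b₁ = 0)
    (hb₂ : D4 p b₂ = a ∧ ∀ q : MonicIrr F, q ≠ p → D4 q b₂ = 0) :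
    ∃ (a₁ : ⋀[ℚ]^4 (UnitsQ (RatFunc F)))
      (a₂ : B2 (RatFunc F) ⊗[ℚ] (⋀[ℚ]^2 (UnitsQ (RatFunc F)))),
      a₁ ∈ LinearMap.range (powMap 4 (unitsQMap (algebraMap F (RatFunc F)))) ∧
      b₁ - b₂ = a₁ + d4 a₂ ∧
      ∀ q : MonicIrr F, DB q a₂ ∈ Submodule.span ℚ
        {y | ∃ x : ResField q, x ≠ 0 ∧ x ≠ 1 ∧ y = B2.gen x ⊗ₜ mkQ x} := by
  have hb (q : MonicIrr F) : D4 q (b₁ - b₂) = 0 := by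
    rcases eq_or_ne q p with rfl | hq
    · rw [map_sub, hb₁.1, hb₂.1, sub_self]
    · rw [map_sub, hb₁.2 q hq, hb₂.2 q hq, sub_self]
  obtain ⟨a₁, a₂, ha₁, hsum, hDBa₂⟩ :=
    statement_8_general ν hν res hres D4 hD4 D2 hD2 DB hDB d4 hd4 hb
  exact ⟨a₁, a₂, ha₁, hsum, fun q => (hDBa₂ q).symm ▸ zero_mem _⟩
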